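/- Let ℓ ≥ 1 be fixed and let a_1,…,a_ℓ be fixed distinct integers. Let X ≥ 2 and let h be an integer with 1 ≤ h ≤ X and h ≠ a_j for all 1 ≤ j ≤ ℓ. Let I ⊂ [1,X] be any set of primes, and let N be the set of positive integers having no prime factor in I. Then Σ_{n≤X} 1_N(n+h) Λ(n+a_1)⋯Λ(n+a_ℓ) ≪ X · Π_{j=1}^ℓ ( |h−a_j| / φ(|h−a_j|) )^{2^{ℓ+1}} · Π_{p ∈ I} (1 − 1/p), with implied constant depending only on ℓ and the a_j. -/

import Mathlib

/-!
Since `Λ ≤ log`, the sum is at most `(C log X) ^ ℓ` times the number of `n ≤ X` in its support. Let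
`z` be a small power of `X`. Apart from `O(z log X)` exceptions, for which some `n + a j` is a power
of a prime `p ≤ z`, such an `n` avoids the residue classes `-a j` modulo every prime `p ≤ z`, and
also the class `-h` when `p ∈ I`. Selberg's sieve bounds the number of these `n` by
`2 X ∏ (1 - ω(p) / p) + √X`, with `ω(p)` the number of distinct classes; Rankin's trick shows that
the truncation at level `z ^ s` keeps at least half of the Euler product defining the main term.

For large `p` the classes `-a j` are distinct, and `-h` differs from all of them unless `p` divides
some `h - a j`. Hence `∏ (1 - ω(p) / p)` is at most `∏_{p ≤ z} (1 - 1 / p) ^ ℓ ≪ (log z) ^ (-ℓ)`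
times the product of `1 - 1 / p` over the `p ∈ I` dividing no `h - a j`. The first factor cancels
the powers of `log X`; restoring the omitted `p ∈ I` costs at most a factor
`∏ |h - a j| / φ(|h - a j|)`, and those with `p > z` only a constant. The errors, of size
`√X (log X) ^ (ℓ + 1)`, are absorbed because `∏_{p ∈ I} (1 - 1 / p) ≫ X ^ (-1 / 4)`.
-/

open ArithmeticFunction Finset

/-- `|m|/φ(|m|)`, with the convention that this is `0` when `m = 0`
(note `φ(0) = 0` and `0/0 = 0` in Lean, so no case split is needed). -/
noncomputable def totientRatio (m : ℤ) : ℝ :=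
  (m.natAbs : ℝ) / (m.natAbs.totient : ℝ)

section SelbergSieve

variable {κ : Type*} {ν : κ → ℝ} {D : Finset (Finset κ)}

theorem prod_div_one_sub_pos (hν : ∀ d ∈ D, ∀ p ∈ d, ν p ∈ Set.Ioo 0 1) {d : Finset κ}
    (hd : d ∈ D) : 0 < ∏ p ∈ d, ν p / (1 - ν p) :=
  prod_pos fun p hp => div_pos (hν d hd p hp).1 (sub_pos.2 (hν d hd p hp).2)

/-- The total mass `∑_{d ∈ D} ∏_{p ∈ d} ν p / (1 - ν p)` of Selberg's sieve of level `D` for the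
local densities `ν`. Squarefree numbers are encoded by the sets of their prime factors. -/
noncomputable def selbergMass (ν : κ → ℝ) (D : Finset (Finset κ)) : ℝ :=
  ∑ d ∈ D, ∏ p ∈ d, ν p / (1 - ν p)

theorem selbergMass_pos (hν : ∀ d ∈ D, ∀ p ∈ d, ν p ∈ Set.Ioo 0 1) (hD : ∅ ∈ D) :
    0 < selbergMass ν D :=
  sum_pos (fun _ => prod_div_one_sub_pos hν) ⟨∅, hD⟩

theorem inv_prod_eq_sum_powerset {R : Type*} [Field R] {f : κ → R} {d : Finset κ}
    (hf : ∀ p ∈ d, f p ≠ 0) :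
    (∏ p ∈ d, f p)⁻¹ = ∑ u ∈ d.powerset, (∏ p ∈ u, f p / (1 - f p))⁻¹ := by
  classical
  have hfactor : ∀ p ∈ d, (f p)⁻¹ = (f p / (1 - f p))⁻¹ + 1 := by
    intro p hp
    have := hf p hp
    field_simp
    ring
  rw [← prod_inv_distrib, prod_congr rfl hfactor, prod_add]
  simp

variable [DecidableEq κ]

theorem sum_Icc_neg_one_pow_card {R : Type*} [CommRing R] (u l : Finset κ) :
    ∑ d ∈ Icc u l, (-1 : R) ^ #d = if u = l then (-1) ^ #u else 0 := by
  by_cases hul : u ⊆ l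
  · have hinj : Set.InjOn (u ∪ ·) ((l \ u).powerset : Set (Finset κ)) := by
      intro s hs t ht hst
      simp only [coe_powerset, Set.mem_preimage, Set.mem_powerset_iff, coe_subset,
        subset_sdiff] at hs ht
      rw [← union_sdiff_cancel_left hs.2.symm, ← union_sdiff_cancel_left ht.2.symm]
      exact congrArg (· \ u) hst
    have hcard : ∀ s ∈ (l \ u).powerset, (-1 : R) ^ #(u ∪ s) = (-1) ^ #u * (-1) ^ #s := by
      intro s hs
      rw [mem_powerset, subset_sdiff] at hs
      rw [card_union_of_disjoint hs.2.symm, pow_add]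
    have hsum : ∑ s ∈ (l \ u).powerset, (-1 : R) ^ #s = if l \ u = ∅ then 1 else 0 := by
      exact_mod_cast congrArg (Int.cast : ℤ → R) (sum_powerset_neg_one_pow_card (x := l \ u))
    rw [Icc_eq_image_powerset hul, sum_image hinj, sum_congr rfl hcard, ← mul_sum, hsum, mul_ite,
      mul_one, mul_zero]
    refine if_congr ?_ rfl rfl
    rw [sdiff_eq_empty_iff_subset]
    exact ⟨hul.antisymm, fun h => h ▸ subset_rfl⟩
  · rw [Icc_eq_empty hul, sum_empty, if_neg fun h => hul h.subset]

/-- Selberg's weights, the minimizer of the quadratic form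
`∑_{d, e ∈ D} w d * w e * ∏_{p ∈ d ∪ e} ν p` subject to `w ∅ = 1`. -/
noncomputable def selbergWeight (ν : κ → ℝ) (D : Finset (Finset κ)) (d : Finset κ) : ℝ :=
  (-1) ^ #d * (∏ p ∈ d, ν p)⁻¹ *
    ((selbergMass ν D)⁻¹ * ∑ l ∈ D with d ⊆ l, ∏ p ∈ l, ν p / (1 - ν p))

/-- The elements of `A` satisfying none of the sifting conditions that occur in `D`, where `F a` is
the set of the conditions that `a` satisfies. -/
def siftedBy {α : Type*} (A : Finset α) (F : α → Finset κ) (D : Finset (Finset κ)) : Finset α :=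
  {a ∈ A | ∀ d ∈ D, Disjoint d (F a)}

theorem card_siftedBy_le_sum {α : Type*} (A : Finset α) (F : α → Finset κ)
    (hD : ∅ ∈ D) {w : Finset κ → ℝ} (hw : w ∅ = 1) :
    (#(siftedBy A F D) : ℝ) ≤ ∑ d ∈ D, ∑ e ∈ D, w d * w e * #{a ∈ A | d ∪ e ⊆ F a} := by
  calc (#(siftedBy A F D) : ℝ) ≤ ∑ a ∈ A, (∑ d ∈ D with d ⊆ F a, w d) ^ 2 := by
        rw [siftedBy, ← sum_boole]
        refine sum_le_sum fun a _ => ?_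
        split_ifs with ha
        · have hfilter : {d ∈ D | d ⊆ F a} = {∅} := by
            ext d
            rw [mem_filter, mem_singleton]
            exact ⟨fun h => (disjoint_self_iff_empty d).1 ((ha d h.1).mono_right h.2),
              fun h => by simp [h, hD]⟩
          simp [hfilter, hw]
        · positivity
    _ = ∑ d ∈ D, ∑ e ∈ D, w d * w e * #{a ∈ A | d ∪ e ⊆ F a} := by
        simp_rw [sq, sum_filter, sum_mul_sum]
        rw [sum_comm]
        refine sum_congr rfl fun d _ => ?_
        rw [sum_comm]
        refine sum_congr rfl fun e _ => ?_
        rw [← sum_boole, mul_sum]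
        refine sum_congr rfl fun a _ => ?_
        by_cases h₁ : d ⊆ F a <;> by_cases h₂ : e ⊆ F a <;> simp [union_subset_iff, h₁, h₂]

theorem selbergWeight_empty (hν : ∀ d ∈ D, ∀ p ∈ d, ν p ∈ Set.Ioo 0 1) (hD : ∅ ∈ D) :
    selbergWeight ν D ∅ = 1 := by
  have hmass := inv_mul_cancel₀ (selbergMass_pos hν hD).ne'
  rw [selbergWeight, filter_true_of_mem fun _ _ => empty_subset _, ← selbergMass, hmass]
  simp

theorem abs_selbergWeight_le (hν : ∀ d ∈ D, ∀ p ∈ d, ν p ∈ Set.Ioo 0 1) {d : Finset κ}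
    (hd : d ∈ D) : |selbergWeight ν D d| ≤ (∏ p ∈ d, ν p)⁻¹ := by
  have hprod : 0 < ∏ p ∈ d, ν p := prod_pos fun p hp => (hν d hd p hp).1
  have hnonneg : 0 ≤ ∑ l ∈ D with d ⊆ l, ∏ p ∈ l, ν p / (1 - ν p) :=
    sum_nonneg fun l hl => (prod_div_one_sub_pos hν (mem_filter.1 hl).1).le
  have hle : ∑ l ∈ D with d ⊆ l, ∏ p ∈ l, ν p / (1 - ν p) ≤ selbergMass ν D :=
    sum_le_sum_of_subset_of_nonneg (filter_subset _ _) fun l hl _ => (prod_div_one_sub_pos hν hl).le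
  rw [selbergWeight, abs_mul, abs_mul, abs_neg_one_pow, one_mul, abs_of_pos (inv_pos.2 hprod),
    abs_of_nonneg (mul_nonneg (inv_nonneg.2 (hnonneg.trans hle)) hnonneg)]
  exact mul_le_of_le_one_right (inv_pos.2 hprod).le
    (inv_mul_le_one_of_le₀ hle (hnonneg.trans hle))

theorem sum_prod_mul_selbergWeight (hν : ∀ d ∈ D, ∀ p ∈ d, ν p ∈ Set.Ioo 0 1)
    (hlower : IsLowerSet (D : Set (Finset κ))) {u : Finset κ} (hu : u ∈ D) :
    ∑ d ∈ D with u ⊆ d, (∏ p ∈ d, ν p) * selbergWeight ν D d =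
      (selbergMass ν D)⁻¹ * ((-1) ^ #u * ∏ p ∈ u, ν p / (1 - ν p)) := by
  calc ∑ d ∈ D with u ⊆ d, (∏ p ∈ d, ν p) * selbergWeight ν D d
      = ∑ d ∈ D with u ⊆ d, ∑ l ∈ D with d ⊆ l,
          (selbergMass ν D)⁻¹ * (∏ p ∈ l, ν p / (1 - ν p)) * (-1) ^ #d := by
        refine sum_congr rfl fun d hd => ?_
        have hprod : ∏ p ∈ d, ν p ≠ 0 :=
          prod_ne_zero_iff.2 fun p hp => (hν d (mem_filter.1 hd).1 p hp).1.ne'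
        rw [selbergWeight, ← sum_mul, ← mul_sum]
        field_simp
    _ = ∑ l ∈ D, ∑ d ∈ Icc u l,
          (selbergMass ν D)⁻¹ * (∏ p ∈ l, ν p / (1 - ν p)) * (-1) ^ #d := by
        refine sum_comm' fun d l => ?_
        simp only [mem_filter, mem_Icc]
        exact ⟨fun h => ⟨⟨h.1.2, h.2.2⟩, h.2.1⟩, fun h => ⟨⟨hlower h.1.2 h.2, h.1.1⟩, h.2, h.1.2⟩⟩
    _ = ∑ l ∈ D, (selbergMass ν D)⁻¹ * (∏ p ∈ l, ν p / (1 - ν p)) *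
          if u = l then (-1) ^ #u else 0 := by
        simp_rw [← mul_sum, sum_Icc_neg_one_pow_card]
    _ = (selbergMass ν D)⁻¹ * ((-1) ^ #u * ∏ p ∈ u, ν p / (1 - ν p)) := by
        simp only [mul_ite, mul_zero, sum_ite_eq, if_pos hu]
        ring

theorem sum_selbergWeight_mul_selbergWeight (hν : ∀ d ∈ D, ∀ p ∈ d, ν p ∈ Set.Ioo 0 1)
    (hlower : IsLowerSet (D : Set (Finset κ))) (hD : ∅ ∈ D) :
    ∑ d ∈ D, ∑ e ∈ D, selbergWeight ν D d * selbergWeight ν D e * ∏ p ∈ d ∪ e, ν p =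
      (selbergMass ν D)⁻¹ := by
  set w := selbergWeight ν D
  have hdiag : ∀ d ∈ D, ∀ e ∈ D, w d * w e * ∏ p ∈ d ∪ e, ν p =
      ∑ u ∈ D, (∏ p ∈ u, ν p / (1 - ν p))⁻¹ *
        ((if u ⊆ d then (∏ p ∈ d, ν p) * w d else 0) *
          if u ⊆ e then (∏ p ∈ e, ν p) * w e else 0) := by
    intro d hd e _
    have hmem : d ∩ e ∈ D := hlower inter_subset_left hd
    have hne : ∀ p ∈ d ∩ e, ν p ≠ 0 := fun p hp => (hν _ hmem p hp).1.ne'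
    have hpowerset : (d ∩ e).powerset = {u ∈ D | u ⊆ d ∩ e} := by
      ext u
      rw [mem_powerset, mem_filter]
      exact ⟨fun h => ⟨hlower h hmem, h⟩, And.right⟩
    rw [← mul_div_cancel_right₀ (∏ p ∈ d ∪ e, ν p) (prod_ne_zero_iff.2 hne), prod_union_inter,
      div_eq_mul_inv, inv_prod_eq_sum_powerset hne, hpowerset, sum_filter, mul_sum, mul_sum]
    refine sum_congr rfl fun u _ => ?_
    by_cases h₁ : u ⊆ d <;> by_cases h₂ : u ⊆ e <;> simp [subset_inter_iff, h₁, h₂]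
    ring
  calc ∑ d ∈ D, ∑ e ∈ D, w d * w e * ∏ p ∈ d ∪ e, ν p
      = ∑ u ∈ D, (∏ p ∈ u, ν p / (1 - ν p))⁻¹ *
          (∑ d ∈ D with u ⊆ d, (∏ p ∈ d, ν p) * w d) ^ 2 := by
        rw [sum_congr rfl fun d hd => (sum_congr rfl (hdiag d hd)).trans sum_comm, sum_comm]
        simp_rw [sq, sum_filter, sum_mul_sum, mul_sum]
    _ = ∑ u ∈ D, (selbergMass ν D)⁻¹ ^ 2 * ∏ p ∈ u, ν p / (1 - ν p) := by
        refine sum_congr rfl fun u hu => ?_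
        have := (prod_div_one_sub_pos hν hu).ne'
        rw [sum_prod_mul_selbergWeight hν hlower hu, mul_pow, mul_pow, ← pow_mul, mul_comm (#u),
          pow_mul, neg_one_sq, one_pow]
        field_simp
    _ = (selbergMass ν D)⁻¹ := by
        rw [← mul_sum, ← selbergMass]
        have := (selbergMass_pos hν hD).ne'
        field_simp

theorem card_siftedBy_le {α : Type*} (A : Finset α) (F : α → Finset κ) (N : ℝ)
    (hν : ∀ d ∈ D, ∀ p ∈ d, ν p ∈ Set.Ioo 0 1) (hlower : IsLowerSet (D : Set (Finset κ)))
    (hD : ∅ ∈ D) :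
    (#(siftedBy A F D) : ℝ) ≤ N / selbergMass ν D +
      ∑ d ∈ D, ∑ e ∈ D, (∏ p ∈ d, ν p)⁻¹ * (∏ p ∈ e, ν p)⁻¹ *
        |#{a ∈ A | d ∪ e ⊆ F a} - N * ∏ p ∈ d ∪ e, ν p| := by
  set w := selbergWeight ν D
  set R : Finset κ → Finset κ → ℝ := fun d e => #{a ∈ A | d ∪ e ⊆ F a} - N * ∏ p ∈ d ∪ e, ν p
  calc (#(siftedBy A F D) : ℝ)
      ≤ ∑ d ∈ D, ∑ e ∈ D, w d * w e * #{a ∈ A | d ∪ e ⊆ F a} :=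
        card_siftedBy_le_sum A F hD (selbergWeight_empty hν hD)
    _ = N * ∑ d ∈ D, ∑ e ∈ D, w d * w e * ∏ p ∈ d ∪ e, ν p +
          ∑ d ∈ D, ∑ e ∈ D, w d * w e * R d e := by
        simp_rw [mul_sum, ← sum_add_distrib, R]
        refine sum_congr rfl fun d _ => sum_congr rfl fun e _ => ?_
        ring
    _ = N / selbergMass ν D + ∑ d ∈ D, ∑ e ∈ D, w d * w e * R d e := by
        rw [sum_selbergWeight_mul_selbergWeight hν hlower hD, div_eq_mul_inv]
    _ ≤ _ := by
        refine add_le_add_right (sum_le_sum fun d hd => sum_le_sum fun e he =>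
          (le_abs_self _).trans ?_) _
        rw [abs_mul, abs_mul]
        exact mul_le_mul_of_nonneg_right (mul_le_mul (abs_selbergWeight_le hν hd)
          (abs_selbergWeight_le hν he) (abs_nonneg _)
          ((abs_nonneg _).trans (abs_selbergWeight_le hν hd))) (abs_nonneg _)

end SelbergSieve

section CongruenceConditions

theorem card_filter_forall_natCast_mem {d : Finset ℕ} (hpos : ∀ m ∈ d, 0 < m)
    (hcop : (d : Set ℕ).Pairwise Nat.Coprime) (Ω : ∀ m, Finset (ZMod m)) :
    #{n ∈ range (∏ m ∈ d, m) | ∀ m ∈ d, (n : ZMod m) ∈ Ω m} = ∏ m ∈ d, #(Ω m) := by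
  have hprod : ∏ m ∈ d, m = ∏ m : d, (m : ℕ) := (prod_coe_sort d id).symm
  have : NeZero (∏ m : d, (m : ℕ)) := ⟨prod_ne_zero_iff.2 fun m _ => (hpos m m.2).ne'⟩
  let e := ZMod.prodEquivPi (fun m : d => (m : ℕ)) fun m k hmk =>
    hcop m.2 k.2 (Subtype.coe_ne_coe.2 hmk)
  have he : ∀ (n : ℕ) (m : d), e n m = n := fun n m => by rw [map_natCast, Pi.natCast_apply]
  rw [← prod_coe_sort d fun m => #(Ω m), ← Fintype.card_piFinset, hprod]
  refine card_nbij (fun n => e n) (fun n hn => ?_) (fun n hn k hk hnk => ?_) fun f hf => ?_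
  · simp only [coe_filter, mem_range, Set.mem_ofPred_eq] at hn
    simp only [Fintype.coe_piFinset, Set.mem_univ_pi, he]
    exact fun m => hn.2 m m.2
  · simp only [coe_filter, mem_range, Set.mem_ofPred_eq] at hn hk
    have hmod := (ZMod.natCast_eq_natCast_iff' _ _ _).1 (e.injective hnk)
    rwa [Nat.mod_eq_of_lt hn.1, Nat.mod_eq_of_lt hk.1] at hmod
  · have hval : e ((e.symm f).val : ℕ) = f := by rw [ZMod.natCast_zmod_val, e.apply_symm_apply]
    refine ⟨(e.symm f).val, ?_, hval⟩
    simp only [Fintype.coe_piFinset, Set.mem_univ_pi, mem_coe] at hf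
    simp only [coe_filter, mem_range, Set.mem_ofPred_eq]
    refine ⟨ZMod.val_lt _, fun m hm => ?_⟩
    rw [← he _ ⟨m, hm⟩, hval]
    exact hf ⟨m, hm⟩

theorem abs_card_Ico_filter_sub_le_of_periodic (Q : ℕ → Prop) [DecidablePred Q] {m : ℕ}
    (hm : 0 < m) (hQ : Function.Periodic Q m) (k N : ℕ) :
    |(#{n ∈ Ico k (k + N) | Q n} : ℝ) - N * (#{n ∈ range m | Q n} / m)| ≤
      #{n ∈ range m | Q n} := by
  set c := #{n ∈ range m | Q n}
  have hperiod : ∀ k, #{n ∈ Ico k (k + m) | Q n} = c := fun k => by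
    rw [Nat.filter_Ico_card_eq_of_periodic k m Q hQ, Nat.count_eq_card_filter_range]
  have hm' : (0 : ℝ) < m := mod_cast hm
  induction N using Nat.strong_induction_on generalizing k with
  | _ N ih =>
    rcases lt_or_ge N m with hN | hN
    · refine abs_sub_le_of_nonneg_of_le (by positivity) ?_ (by positivity) ?_
      · rw [← hperiod k]
        exact_mod_cast card_le_card (filter_subset_filter _ (Ico_subset_Ico_right (by lia)))
      · rw [mul_div_left_comm]
        exact mul_le_of_le_one_right (by positivity) ((div_le_one hm').2 (mod_cast hN.le))
    · obtain ⟨N, rfl⟩ := Nat.exists_eq_add_of_le hN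
      have hsplit : #{n ∈ Ico k (k + (m + N)) | Q n} =
          c + #{n ∈ Ico (k + m) (k + m + N) | Q n} := by
        rw [← hperiod k, ← card_union_of_disjoint, ← filter_union,
          Ico_union_Ico_eq_Ico (by lia) (by lia), add_assoc]
        exact disjoint_filter_filter (Ico_disjoint_Ico_consecutive _ _ _)
      rw [hsplit]
      push_cast
      convert ih N (by lia) (k + m) using 2
      field_simp
      ring

theorem abs_card_filter_forall_natCast_mem_sub_le {d : Finset ℕ} (hpos : ∀ m ∈ d, 0 < m)
    (hcop : (d : Set ℕ).Pairwise Nat.Coprime) (Ω : ∀ m, Finset (ZMod m)) (N : ℕ) :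
    |(#{n ∈ Icc 1 N | ∀ m ∈ d, (n : ZMod m) ∈ Ω m} : ℝ) - N * ∏ m ∈ d, (#(Ω m) : ℝ) / m| ≤
      ∏ m ∈ d, (#(Ω m) : ℝ) := by
  have hperiodic : Function.Periodic (fun n : ℕ => ∀ m ∈ d, (n : ZMod m) ∈ Ω m) (∏ m ∈ d, m) := by
    intro n
    refine propext <| forall₂_congr fun m hm => ?_
    rw [Nat.cast_add, (ZMod.natCast_eq_zero_iff _ m).2 (dvd_prod_of_mem (fun m => m) hm), add_zero]
  have hcount := abs_card_Ico_filter_sub_le_of_periodic _ (prod_pos hpos) hperiodic 1 N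
  rw [card_filter_forall_natCast_mem hpos hcop, add_comm 1 N, Ico_add_one_right_eq_Icc] at hcount
  push_cast at hcount
  rwa [prod_div_distrib]

end CongruenceConditions

section ProductsOverUnions

variable {ι κ R : Type*} [DecidableEq κ] [CommSemiring R] [PartialOrder R] [IsOrderedRing R]
  {f : κ → R}

theorem prod_mul_prod_le_prod_union (hf₀ : ∀ k, 0 ≤ f k) (hf₁ : ∀ k, f k ≤ 1) (s t : Finset κ) :
    (∏ k ∈ s, f k) * ∏ k ∈ t, f k ≤ ∏ k ∈ s ∪ t, f k := by
  rw [← prod_union_inter]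
  exact mul_le_of_le_one_right (prod_nonneg fun k _ => hf₀ k)
    (prod_le_one (fun k _ => hf₀ k) fun k _ => hf₁ k)

theorem prod_prod_le_prod_biUnion (hf₀ : ∀ k, 0 ≤ f k) (hf₁ : ∀ k, f k ≤ 1) (s : Finset ι)
    (t : ι → Finset κ) : ∏ i ∈ s, ∏ k ∈ t i, f k ≤ ∏ k ∈ s.biUnion t, f k := by
  classical
  induction s using Finset.induction_on with
  | empty => simp
  | insert i s hi ih =>
    rw [prod_insert hi, biUnion_insert]
    exact (mul_le_mul_of_nonneg_left ih (prod_nonneg fun k _ => hf₀ k)).trans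
      (prod_mul_prod_le_prod_union hf₀ hf₁ _ _)

end ProductsOverUnions

section PrimeProducts

variable {z X : ℝ}

theorem sum_Ioc_vonMangoldt_div_le (n : ℕ) :
    ∑ m ∈ Ioc 0 n, Λ m / m ≤ 2 * Real.log n := by
  rcases n.eq_zero_or_pos with rfl | hn
  · simp
  have hfloor : ∀ m ∈ Ioc 0 n, (n : ℝ) / 2 * (Λ m / m) ≤ Λ m * (n / m : ℕ) := by
    intro m hm
    obtain ⟨hm0, hmn⟩ := mem_Ioc.1 hm
    have hm0' : (0 : ℝ) < m := mod_cast hm0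
    have hhalf : (n : ℝ) / m / 2 ≤ (n / m : ℕ) := by
      rw [← Nat.floor_div_eq_div (K := ℝ)]
      exact (Nat.div_two_lt_floor ((one_le_div hm0').2 (mod_cast hmn))).le
    calc (n : ℝ) / 2 * (Λ m / m) = Λ m * (n / m / 2) := by ring
      _ ≤ Λ m * (n / m : ℕ) := mul_le_mul_of_nonneg_left hhalf vonMangoldt_nonneg
  have hsum : (n : ℝ) / 2 * ∑ m ∈ Ioc 0 n, Λ m / m ≤ n * Real.log n := by
    calc (n : ℝ) / 2 * ∑ m ∈ Ioc 0 n, Λ m / m ≤ ∑ m ∈ Ioc 0 n, Λ m * (n / m : ℕ) := by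
          rw [mul_sum]
          exact sum_le_sum hfloor
      _ = ∑ m ∈ Ioc 0 n, Real.log m := by
          rw [← sum_Ioc_mul_zeta_eq_sum, vonMangoldt_mul_zeta]
          rfl
      _ ≤ ∑ _m ∈ Ioc 0 n, Real.log n := sum_le_sum fun m hm => by
          obtain ⟨hm0, hmn⟩ := mem_Ioc.1 hm
          exact Real.log_le_log (mod_cast hm0) (mod_cast hmn)
      _ = n * Real.log n := by simp
  have : (0 : ℝ) < n := mod_cast hn
  refine le_of_mul_le_mul_left (a := (n : ℝ) / 2) ?_ (by positivity)
  linarith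

theorem sum_log_div_le_two_mul_log {Q : Finset ℕ} (hz : 1 ≤ z)
    (hQ : ∀ p ∈ Q, p.Prime ∧ (p : ℝ) ≤ z) : ∑ p ∈ Q, Real.log p / p ≤ 2 * Real.log z := by
  have hfloor : 0 < ⌊z⌋₊ := Nat.floor_pos.2 hz
  calc ∑ p ∈ Q, Real.log p / p = ∑ p ∈ Q, Λ p / p :=
        sum_congr rfl fun p hp => by rw [vonMangoldt_apply_prime (hQ p hp).1]
    _ ≤ ∑ m ∈ Ioc 0 ⌊z⌋₊, Λ m / m :=
        sum_le_sum_of_subset_of_nonneg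
          (fun p hp => mem_Ioc.2 ⟨(hQ p hp).1.pos, Nat.le_floor (hQ p hp).2⟩)
          fun m _ _ => div_nonneg vonMangoldt_nonneg m.cast_nonneg
    _ ≤ 2 * Real.log ⌊z⌋₊ := sum_Ioc_vonMangoldt_div_le _
    _ ≤ 2 * Real.log z := by
        gcongr
        exact Nat.floor_le (by linarith)

theorem log_mul_prod_primesLE_one_sub_one_div_le_one (n : ℕ) :
    Real.log (n + 1) * ∏ p ∈ n.primesLE, (1 - 1 / (p : ℝ)) ≤ 1 := by
  let f : ℕ →* ℝ :=
    { toFun := fun n => (n : ℝ)⁻¹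
      map_one' := by simp
      map_mul' := fun m n => by simp [mul_comm] }
  have hf : ∀ {p : ℕ}, p.Prime → ‖f p‖ < 1 := fun {p} hp => by
    simpa [f] using inv_lt_one_of_one_lt₀ (by exact_mod_cast hp.one_lt : (1 : ℝ) < p)
  obtain ⟨-, hsum⟩ :=
    EulerProduct.summable_and_hasSum_smoothNumbers_prod_primesBelow_geometric hf (n + 1)
  have hmem : ∀ m ∈ Icc 1 n, m ∈ (n + 1).smoothNumbers := fun m hm =>
    Nat.mem_smoothNumbers_of_lt (mem_Icc.1 hm).1 (Nat.lt_succ_of_le (mem_Icc.1 hm).2)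
  have hlog : Real.log (n + 1) ≤ ∏ p ∈ n.primesLE, (1 - f p)⁻¹ := by
    calc Real.log (n + 1) ≤ (harmonic n : ℝ) := mod_cast log_add_one_le_harmonic n
      _ = ∑ m ∈ Icc 1 n, f m := by simp [harmonic_eq_sum_Icc, f]
      _ = ∑ m ∈ (Icc 1 n).attach.map
            ⟨fun m => (⟨m.1, hmem m.1 m.2⟩ : (n + 1).smoothNumbers),
              fun _ _ h => Subtype.ext (Subtype.mk.inj h)⟩, f m := by
          rw [sum_map]
          exact (sum_attach _ _).symm
      _ ≤ _ := sum_le_hasSum _ (fun m _ => by simp [f]) hsum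
  have hpos : 0 < ∏ p ∈ n.primesLE, (1 - f p) := prod_pos fun p hp =>
    sub_pos.2 ((le_abs_self _).trans_lt (hf (Nat.mem_primesLE.1 hp).2))
  rw [prod_inv_distrib, ← one_div, le_div_iff₀ hpos] at hlog
  simpa [f] using hlog

theorem exp_neg_two_mul_le_one_sub {x : ℝ} (hx₀ : 0 ≤ x) (hx : x ≤ 1 / 2) :
    Real.exp (-(2 * x)) ≤ 1 - x := by
  rw [Real.exp_neg, inv_le_iff_one_le_mul₀ (Real.exp_pos _)]
  calc 1 ≤ (1 - x) * (2 * x + 1) := by nlinarith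
    _ ≤ (1 - x) * Real.exp (2 * x) :=
        mul_le_mul_of_nonneg_left (Real.add_one_le_exp _) (by linarith)

theorem exp_neg_le_prod_one_sub_one_div {Q : Finset ℕ} (hz : 1 < z) (hX : 1 ≤ X)
    (hQ : ∀ p ∈ Q, p.Prime ∧ z < p ∧ (p : ℝ) ≤ X) :
    Real.exp (-(4 * (Real.log X / Real.log z))) ≤ ∏ p ∈ Q, (1 - 1 / (p : ℝ)) := by
  have hlogz := Real.log_pos hz
  have hp0 : ∀ p ∈ Q, (0 : ℝ) < p := fun p hp => mod_cast (hQ p hp).1.pos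
  have hsum : ∑ p ∈ Q, 2 * (1 / (p : ℝ)) ≤ 4 * (Real.log X / Real.log z) := by
    calc ∑ p ∈ Q, 2 * (1 / (p : ℝ)) ≤ ∑ p ∈ Q, 2 / Real.log z * (Real.log p / p) := by
          refine sum_le_sum fun p hp => ?_
          have hle : 1 ≤ Real.log p / Real.log z :=
            (one_le_div hlogz).2 (Real.log_le_log (by linarith) (hQ p hp).2.1.le)
          have := hp0 p hp
          calc 2 * (1 / (p : ℝ)) ≤ 2 * (1 / p) * (Real.log p / Real.log z) :=
                le_mul_of_one_le_right (by positivity) hle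
            _ = 2 / Real.log z * (Real.log p / p) := by ring
      _ = 2 / Real.log z * ∑ p ∈ Q, Real.log p / p := by rw [mul_sum]
      _ ≤ 2 / Real.log z * (2 * Real.log X) := by
          gcongr
          exact sum_log_div_le_two_mul_log hX fun p hp => ⟨(hQ p hp).1, (hQ p hp).2.2⟩
      _ = 4 * (Real.log X / Real.log z) := by ring
  calc Real.exp (-(4 * (Real.log X / Real.log z)))
      ≤ Real.exp (∑ p ∈ Q, -(2 * (1 / (p : ℝ)))) := by
        rw [sum_neg_distrib]
        gcongr
    _ = ∏ p ∈ Q, Real.exp (-(2 * (1 / (p : ℝ)))) := Real.exp_sum _ _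
    _ ≤ ∏ p ∈ Q, (1 - 1 / (p : ℝ)) := by
        refine prod_le_prod (fun _ _ => (Real.exp_pos _).le) fun p hp => ?_
        have := hp0 p hp
        exact exp_neg_two_mul_le_one_sub (by positivity)
          (one_div_le_one_div_of_le two_pos (mod_cast (hQ p hp).1.two_le))

theorem prod_Icc_two_one_sub_one_div {n : ℕ} (hn : 1 ≤ n) :
    ∏ k ∈ Icc 2 n, (1 - 1 / (k : ℝ)) = 1 / n := by
  induction n, hn using Nat.le_induction with
  | base => simp
  | succ n hn ih =>
    rw [prod_Icc_succ_top (by lia), ih]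
    have : (0 : ℝ) < n := mod_cast hn
    push_cast
    field_simp
    ring

theorem one_div_le_prod_one_sub_one_div {Q : Finset ℕ} {n : ℕ} (hn : 1 ≤ n) (hQ : Q ⊆ Icc 2 n) :
    1 / (n : ℝ) ≤ ∏ k ∈ Q, (1 - 1 / (k : ℝ)) := by
  rw [← prod_Icc_two_one_sub_one_div hn]
  exact prod_le_prod_of_subset_of_le_one hQ (fun k _ => Nat.one_sub_one_div_cast_nonneg k)
    fun k _ _ => Nat.one_sub_one_div_cast_le_one k

theorem exp_neg_mul_rpow_neg_le_prod_one_sub_one_div {ε : ℝ} {I : Finset ℕ} (hε : 0 < ε)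
    (hX : 1 < X) (hI : ∀ p ∈ I, p.Prime ∧ (p : ℝ) ≤ X) :
    Real.exp (-(4 / ε)) * X ^ (-ε) ≤ ∏ p ∈ I, (1 - 1 / (p : ℝ)) := by
  have hX0 : 0 < X := by linarith
  have hz : 1 < X ^ ε := Real.one_lt_rpow hX hε
  have hlog : Real.log X / Real.log (X ^ ε) = 1 / ε := by
    have := (Real.log_pos hX).ne'
    rw [Real.log_rpow hX0]
    field_simp
  rw [← prod_filter_mul_prod_filter_not I (fun p : ℕ => X ^ ε < p)]
  refine mul_le_mul ?_ ?_ (by positivity)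
    (prod_nonneg fun p _ => Nat.one_sub_one_div_cast_nonneg p)
  · rw [← mul_one_div, ← hlog]
    refine exp_neg_le_prod_one_sub_one_div hz hX.le fun p hp => ?_
    rw [mem_filter] at hp
    exact ⟨(hI p hp.1).1, hp.2, (hI p hp.1).2⟩
  · have hfloor : 1 ≤ ⌊X ^ ε⌋₊ := Nat.one_le_floor_iff _ |>.2 hz.le
    calc X ^ (-ε) = 1 / X ^ ε := by rw [Real.rpow_neg hX0.le, one_div]
      _ ≤ 1 / (⌊X ^ ε⌋₊ : ℝ) :=
          one_div_le_one_div_of_le (mod_cast hfloor) (Nat.floor_le (by positivity))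
      _ ≤ _ := one_div_le_prod_one_sub_one_div hfloor fun p hp => by
          rw [mem_filter] at hp
          exact mem_Icc.2 ⟨(hI p hp.1).1.two_le, Nat.le_floor (not_lt.1 hp.2)⟩

/-- The primes in `(B, k]`. -/
def primesIoc (B k : ℕ) : Finset ℕ := {p ∈ Ioc B k | p.Prime}

theorem mem_primesIoc {B k p : ℕ} : p ∈ primesIoc B k ↔ (B < p ∧ p ≤ k) ∧ p.Prime := by
  rw [primesIoc, mem_filter, mem_Ioc]

theorem prod_primesIoc_one_sub_one_div_le {B : ℕ} (hB : 1 ≤ B) (hz : 1 < z) :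
    ∏ p ∈ primesIoc B ⌊z⌋₊, (1 - 1 / (p : ℝ)) ≤ B / Real.log z := by
  have hB₀ : (0 : ℝ) < B := mod_cast hB
  have hlog : Real.log z ≤ Real.log (⌊z⌋₊ + 1) :=
    Real.log_le_log (by linarith) (Nat.lt_floor_add_one z).le
  have hf₀ : ∀ p : ℕ, 0 ≤ 1 - 1 / (p : ℝ) := fun p => Nat.one_sub_one_div_cast_nonneg p
  have hf₁ : ∀ p : ℕ, 1 - 1 / (p : ℝ) ≤ 1 := fun p => Nat.one_sub_one_div_cast_le_one p
  have hsub : ⌊z⌋₊.primesLE ⊆ Icc 2 B ∪ primesIoc B ⌊z⌋₊ := by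
    intro p hp
    obtain ⟨hpz, hp⟩ := Nat.mem_primesLE.1 hp
    rw [mem_union, mem_Icc, mem_primesIoc]
    rcases le_or_gt p B with hpB | hpB
    exacts [Or.inl ⟨hp.two_le, hpB⟩, Or.inr ⟨⟨hpB, hpz⟩, hp⟩]
  have hprod : 1 / B * ∏ p ∈ primesIoc B ⌊z⌋₊, (1 - 1 / (p : ℝ)) ≤
      ∏ p ∈ ⌊z⌋₊.primesLE, (1 - 1 / (p : ℝ)) := by
    rw [← prod_Icc_two_one_sub_one_div hB]
    exact (prod_mul_prod_le_prod_union hf₀ hf₁ _ _).trans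
      (prod_le_prod_of_subset_of_le_one hsub (fun p _ => hf₀ p) fun p _ _ => hf₁ p)
  rw [le_div_iff₀ (Real.log_pos hz)]
  calc _ = B * (Real.log z * (1 / B * ∏ p ∈ primesIoc B ⌊z⌋₊, (1 - 1 / (p : ℝ)))) := by
        field_simp
    _ ≤ B * (Real.log (⌊z⌋₊ + 1) * ∏ p ∈ ⌊z⌋₊.primesLE, (1 - 1 / (p : ℝ))) := by
        refine mul_le_mul_of_nonneg_left (mul_le_mul hlog hprod ?_ ?_) hB₀.le
        · exact mul_nonneg (by positivity) (prod_nonneg fun p _ => hf₀ p)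
        · exact Real.log_nonneg (by linarith [Nat.cast_nonneg (α := ℝ) ⌊z⌋₊])
    _ ≤ B := mul_le_of_le_one_right hB₀.le (log_mul_prod_primesLE_one_sub_one_div_le_one _)

end PrimeProducts

section LevelOfDistribution

/-- The sets of elements of `P` with product at most `y`. For a set `P` of primes they encode the
squarefree numbers up to `y` composed of primes in `P`, the level of a sieve. -/
noncomputable def levelSets (P : Finset ℕ) (y : ℝ) : Finset (Finset ℕ) :=
  {d ∈ P.powerset | ∏ p ∈ d, (p : ℝ) ≤ y}

variable {P d : Finset ℕ} {y : ℝ}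

theorem mem_levelSets : d ∈ levelSets P y ↔ d ⊆ P ∧ ∏ p ∈ d, (p : ℝ) ≤ y := by
  rw [levelSets, mem_filter, mem_powerset]

theorem empty_mem_levelSets (hy : 1 ≤ y) : ∅ ∈ levelSets P y :=
  mem_levelSets.2 ⟨empty_subset _, by simpa⟩

theorem isLowerSet_levelSets (hP : ∀ p ∈ P, 0 < p) :
    IsLowerSet (levelSets P y : Set (Finset ℕ)) := by
  intro d u hud hd
  rw [mem_coe, mem_levelSets] at hd ⊢
  refine ⟨hud.trans hd.1, le_trans ?_ hd.2⟩
  exact prod_le_prod_of_subset_of_one_le hud (fun _ _ => Nat.cast_nonneg _)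
    fun p hp _ => mod_cast hP p (hd.1 hp)

theorem card_levelSets_le (hP : ∀ p ∈ P, p.Prime) (hy : 0 ≤ y) : (#(levelSets P y) : ℝ) ≤ y := by
  have hle : #(levelSets P y) ≤ #(Icc 1 ⌊y⌋₊) := by
    refine card_le_card_of_injOn (fun d => ∏ p ∈ d, p) (fun d hd => ?_) fun d hd e he hde => ?_
    · rw [mem_coe, mem_levelSets] at hd
      exact mem_coe.2 (mem_Icc.2 ⟨prod_pos fun p hp => (hP p (hd.1 hp)).pos,
        Nat.le_floor (by simpa using hd.2)⟩)
    · rw [mem_coe, mem_levelSets] at hd he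
      rw [← Nat.primeFactors_prod fun p hp => hP p (hd.1 hp),
        ← Nat.primeFactors_prod fun p hp => hP p (he.1 hp)]
      exact congrArg Nat.primeFactors hde
  rw [Nat.card_Icc, Nat.add_sub_cancel] at hle
  exact (Nat.cast_le.2 hle).trans (Nat.floor_le hy)

variable {g : ℕ → ℝ} {z C : ℝ} {s : ℕ}

theorem sum_powerset_sdiff_levelSets_le {ε : ℝ} (hy : 0 < y) (hε : 0 ≤ ε)
    (hg : ∀ p ∈ P, 0 ≤ g p) :
    ∑ d ∈ P.powerset \ levelSets P y, ∏ p ∈ d, g p ≤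
      y ^ (-ε) * ∏ p ∈ P, (1 + g p * p ^ ε) := by
  have hgd : ∀ d ∈ P.powerset, 0 ≤ ∏ p ∈ d, g p := fun d hd =>
    prod_nonneg fun p hp => hg p (mem_powerset.1 hd hp)
  have hsplit : ∀ d : Finset ℕ, y ^ (-ε) * ∏ p ∈ d, (g p * p ^ ε) =
      (∏ p ∈ d, g p) * ((∏ p ∈ d, (p : ℝ)) ^ ε / y ^ ε) := fun d => by
    rw [prod_mul_distrib, Real.finsetProd_rpow _ _ fun _ _ => Nat.cast_nonneg _,
      Real.rpow_neg hy.le]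
    ring
  calc ∑ d ∈ P.powerset \ levelSets P y, ∏ p ∈ d, g p
      ≤ ∑ d ∈ P.powerset \ levelSets P y, y ^ (-ε) * ∏ p ∈ d, (g p * p ^ ε) := by
        refine sum_le_sum fun d hd => ?_
        rw [mem_sdiff, mem_levelSets, ← mem_powerset, not_and, not_le] at hd
        rw [hsplit]
        refine le_mul_of_one_le_right (hgd d hd.1) ((one_le_div (by positivity)).2 ?_)
        exact Real.rpow_le_rpow hy.le (hd.2 hd.1).le hε
    _ ≤ ∑ d ∈ P.powerset, y ^ (-ε) * ∏ p ∈ d, (g p * p ^ ε) := by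
        refine sum_le_sum_of_subset_of_nonneg sdiff_subset fun d hd _ => ?_
        rw [hsplit]
        have := hgd d hd
        positivity
    _ = y ^ (-ε) * ∏ p ∈ P, (1 + g p * p ^ ε) := by rw [prod_one_add, mul_sum]

theorem rpow_inv_log_le {x : ℝ} (hx : 1 ≤ x) (hz : 1 < z) (hxz : x ≤ z) :
    x ^ (Real.log z)⁻¹ ≤ 1 + 2 * (Real.log x / Real.log z) := by
  have hx₀ : 0 < x := zero_lt_one.trans_le hx
  have hnonneg : 0 ≤ Real.log x / Real.log z :=
    div_nonneg (Real.log_nonneg hx) (Real.log_pos hz).le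
  have hle : Real.log x / Real.log z ≤ 1 :=
    (div_le_one (Real.log_pos hz)).2 (Real.log_le_log hx₀ hxz)
  have habs := Real.abs_exp_sub_one_le (by rwa [abs_of_nonneg hnonneg])
  rw [abs_of_nonneg hnonneg] at habs
  rw [Real.rpow_def_of_pos hx₀, ← div_eq_mul_inv]
  linarith [le_abs_self (Real.exp (Real.log x / Real.log z) - 1)]

theorem one_add_mul_rpow_inv_log_le {x t : ℝ} (hx : 1 ≤ x) (hz : 1 < z) (hxz : x ≤ z)
    (ht : 0 ≤ t) (htC : t ≤ C / x) :
    1 + t * x ^ (Real.log z)⁻¹ ≤ Real.exp (2 * C / Real.log z * (Real.log x / x)) * (1 + t) := by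
  have hratio : 0 ≤ Real.log x / Real.log z := div_nonneg (Real.log_nonneg hx) (Real.log_pos hz).le
  have hlinear : t * (2 * (Real.log x / Real.log z)) ≤
      2 * C / Real.log z * (Real.log x / x) := by
    calc t * (2 * (Real.log x / Real.log z)) ≤ C / x * (2 * (Real.log x / Real.log z)) := by gcongr
      _ = 2 * C / Real.log z * (Real.log x / x) := by ring
  calc 1 + t * x ^ (Real.log z)⁻¹ ≤ 1 + t * (1 + 2 * (Real.log x / Real.log z)) := by
        gcongr
        exact rpow_inv_log_le hx hz hxz
    _ ≤ (1 + t * (2 * (Real.log x / Real.log z))) * (1 + t) := by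
        have : 0 ≤ t * t * (2 * (Real.log x / Real.log z)) := by positivity
        linarith
    _ ≤ Real.exp (2 * C / Real.log z * (Real.log x / x)) * (1 + t) := by
        gcongr
        linarith [Real.add_one_le_exp (2 * C / Real.log z * (Real.log x / x))]

theorem prod_one_add_mul_rpow_inv_log_le (hz : 1 < z) (hP : ∀ p ∈ P, p.Prime ∧ (p : ℝ) ≤ z)
    (hg : ∀ p ∈ P, 0 ≤ g p) (hC : 0 ≤ C) (hgC : ∀ p ∈ P, g p ≤ C / p) :
    ∏ p ∈ P, (1 + g p * p ^ (Real.log z)⁻¹) ≤ Real.exp (4 * C) * ∏ p ∈ P, (1 + g p) := by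
  have hlogz := Real.log_pos hz
  have hfactor : ∀ p ∈ P, 1 + g p * p ^ (Real.log z)⁻¹ ≤
      Real.exp (2 * C / Real.log z * (Real.log p / p)) * (1 + g p) := fun p hp =>
    one_add_mul_rpow_inv_log_le (mod_cast (hP p hp).1.one_le) hz (hP p hp).2 (hg p hp) (hgC p hp)
  have hprod : 0 ≤ ∏ p ∈ P, (1 + g p) := prod_nonneg fun p hp => by linarith [hg p hp]
  calc ∏ p ∈ P, (1 + g p * p ^ (Real.log z)⁻¹)
      ≤ ∏ p ∈ P, (Real.exp (2 * C / Real.log z * (Real.log p / p)) * (1 + g p)) := by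
        refine prod_le_prod (fun p hp => ?_) hfactor
        have := hg p hp
        positivity
    _ = Real.exp (2 * C / Real.log z * ∑ p ∈ P, Real.log p / p) * ∏ p ∈ P, (1 + g p) := by
        rw [prod_mul_distrib, ← Real.exp_sum, mul_sum]
    _ ≤ Real.exp (2 * C / Real.log z * (2 * Real.log z)) * ∏ p ∈ P, (1 + g p) := by
        gcongr
        exact sum_log_div_le_two_mul_log hz.le hP
    _ = Real.exp (4 * C) * ∏ p ∈ P, (1 + g p) := by
        congr 2
        field_simp
        ring

/-- Rankin's trick: the sets with product larger than `z ^ s` are weighted by the power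
`(z ^ s)⁻¹ ^ ε * (∏ p ∈ d, p) ^ ε ≥ 1`, with `ε = 1 / log z`. -/
theorem half_prod_one_add_le_sum_levelSets (hz : 1 < z)
    (hP : ∀ p ∈ P, p.Prime ∧ (p : ℝ) ≤ z) (hg : ∀ p ∈ P, 0 ≤ g p) (hC : 0 ≤ C)
    (hgC : ∀ p ∈ P, g p ≤ C / p) (hs : 4 * C + 1 ≤ s) :
    (∏ p ∈ P, (1 + g p)) / 2 ≤ ∑ d ∈ levelSets P (z ^ s), ∏ p ∈ d, g p := by
  have hlogz := Real.log_pos hz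
  have hprod : 0 ≤ ∏ p ∈ P, (1 + g p) := prod_nonneg fun p hp => by linarith [hg p hp]
  have hpow : (z ^ s) ^ (-(Real.log z)⁻¹) = Real.exp (-s) := by
    rw [Real.rpow_def_of_pos (by positivity), Real.log_pow]
    field_simp
  have hexp : Real.exp (-s) * Real.exp (4 * C) ≤ 1 / 2 := by
    calc Real.exp (-s) * Real.exp (4 * C) ≤ Real.exp (-1) := by
          rw [← Real.exp_add]
          exact Real.exp_le_exp.2 (by linarith)
      _ ≤ 1 / 2 := by
          rw [Real.exp_neg, one_div]
          exact inv_anti₀ two_pos (by linarith [Real.add_one_le_exp 1])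
  have htail : ∑ d ∈ P.powerset \ levelSets P (z ^ s), ∏ p ∈ d, g p ≤
      (∏ p ∈ P, (1 + g p)) / 2 := by
    calc _ ≤ (z ^ s) ^ (-(Real.log z)⁻¹) * ∏ p ∈ P, (1 + g p * p ^ (Real.log z)⁻¹) :=
          sum_powerset_sdiff_levelSets_le (by positivity) (by positivity) hg
      _ ≤ Real.exp (-s) * (Real.exp (4 * C) * ∏ p ∈ P, (1 + g p)) := by
          rw [hpow]
          exact mul_le_mul_of_nonneg_left (prod_one_add_mul_rpow_inv_log_le hz hP hg hC hgC)
            (Real.exp_pos _).le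
      _ = Real.exp (-s) * Real.exp (4 * C) * ∏ p ∈ P, (1 + g p) := (mul_assoc _ _ _).symm
      _ ≤ 1 / 2 * ∏ p ∈ P, (1 + g p) := mul_le_mul_of_nonneg_right hexp hprod
      _ = (∏ p ∈ P, (1 + g p)) / 2 := by ring
  have htotal : ∑ d ∈ P.powerset \ levelSets P (z ^ s), ∏ p ∈ d, g p +
      ∑ d ∈ levelSets P (z ^ s), ∏ p ∈ d, g p = ∏ p ∈ P, (1 + g p) :=
    (sum_sdiff (filter_subset _ _)).trans (prod_one_add P).symm
  linarith

end LevelOfDistribution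

section BoundedDimension

/-- The integers `1 ≤ n ≤ N` that avoid the residue classes `Ω p` modulo every `p ∈ P`. -/
def siftedSet (N : ℕ) (P : Finset ℕ) (Ω : ∀ p, Finset (ZMod p)) : Finset ℕ :=
  {n ∈ Icc 1 N | ∀ p ∈ P, (n : ZMod p) ∉ Ω p}

variable {P : Finset ℕ} {Ω : ∀ p, Finset (ZMod p)} {z : ℝ} {κ s : ℕ}

theorem half_inv_prod_one_sub_le_selbergMass {ν : ℕ → ℝ} (hz : 1 < z)
    (hP : ∀ p ∈ P, p.Prime ∧ (p : ℝ) ≤ z) (hν₀ : ∀ p ∈ P, 0 ≤ ν p) (hν : ∀ p ∈ P, ν p ≤ 1 / 2)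
    (hνκ : ∀ p ∈ P, ν p ≤ κ / p) (hs : 8 * κ + 1 ≤ s) :
    (∏ p ∈ P, (1 - ν p))⁻¹ / 2 ≤ selbergMass ν (levelSets P (z ^ s)) := by
  have hone_sub : ∀ p ∈ P, 0 < 1 - ν p := fun p hp => by linarith [hν p hp]
  have hprod : ∏ p ∈ P, (1 + ν p / (1 - ν p)) = (∏ p ∈ P, (1 - ν p))⁻¹ := by
    rw [← prod_inv_distrib]
    refine prod_congr rfl fun p hp => ?_
    have := (hone_sub p hp).ne'
    field_simp
    ring
  have hbound : ∀ p ∈ P, ν p / (1 - ν p) ≤ 2 * κ / p := by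
    intro p hp
    calc ν p / (1 - ν p) ≤ ν p / (1 / 2) :=
          div_le_div_of_nonneg_left (hν₀ p hp) (by norm_num) (by linarith [hν p hp])
      _ = 2 * ν p := by ring
      _ ≤ 2 * (κ / p) := mul_le_mul_of_nonneg_left (hνκ p hp) zero_le_two
      _ = 2 * κ / p := by ring
  rw [← hprod]
  refine half_prod_one_add_le_sum_levelSets hz hP
    (fun p hp => div_nonneg (hν₀ p hp) (hone_sub p hp).le) (by positivity) hbound ?_
  have : (8 * κ + 1 : ℝ) ≤ s := mod_cast hs
  linarith

theorem inv_prod_density_mul_prod_card_union_le (hΩ : ∀ p ∈ P, (Ω p).Nonempty)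
    {d e : Finset ℕ} (hd : d ⊆ P) (he : e ⊆ P) :
    (∏ p ∈ d, (#(Ω p) : ℝ) / p)⁻¹ * (∏ p ∈ e, (#(Ω p) : ℝ) / p)⁻¹ * ∏ p ∈ d ∪ e, (#(Ω p) : ℝ) ≤
      (∏ p ∈ d, (p : ℝ)) * ∏ p ∈ e, (p : ℝ) := by
  have hcard : ∀ p ∈ P, (1 : ℝ) ≤ #(Ω p) := fun p hp => mod_cast (hΩ p hp).card_pos
  have hpos : ∀ {u}, u ⊆ P → 0 < ∏ p ∈ u, (#(Ω p) : ℝ) := fun hu =>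
    prod_pos fun p hp => zero_lt_one.trans_le (hcard p (hu hp))
  have hinter : 1 ≤ ∏ p ∈ d ∩ e, (#(Ω p) : ℝ) :=
    one_le_prod fun p hp => hcard p (hd (mem_of_mem_inter_left hp))
  have hunion : ∏ p ∈ d ∪ e, (#(Ω p) : ℝ) ≤ (∏ p ∈ d, (#(Ω p) : ℝ)) * ∏ p ∈ e, (#(Ω p) : ℝ) := by
    rw [← prod_union_inter]
    exact le_mul_of_one_le_right (hpos (union_subset hd he)).le hinter
  have := hpos hd
  have := hpos he
  rw [prod_div_distrib, prod_div_distrib, inv_div, inv_div, div_mul_div_comm, div_mul_eq_mul_div,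
    div_le_iff₀ (by positivity)]
  gcongr

theorem sum_levelSets_remainder_le {y : ℝ} (hP : ∀ p ∈ P, p.Prime)
    (hΩ : ∀ p ∈ P, (Ω p).Nonempty) (hy : 0 ≤ y) (N : ℕ) :
    ∑ d ∈ levelSets P y, ∑ e ∈ levelSets P y,
      (∏ p ∈ d, (#(Ω p) : ℝ) / p)⁻¹ * (∏ p ∈ e, (#(Ω p) : ℝ) / p)⁻¹ *
        |#{n ∈ Icc 1 N | d ∪ e ⊆ {p ∈ P | ((n : ℕ) : ZMod p) ∈ Ω p}} -
          N * ∏ p ∈ d ∪ e, (#(Ω p) : ℝ) / p| ≤ y ^ 4 := by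
  have hterm : ∀ d ∈ levelSets P y, ∀ e ∈ levelSets P y,
      (∏ p ∈ d, (#(Ω p) : ℝ) / p)⁻¹ * (∏ p ∈ e, (#(Ω p) : ℝ) / p)⁻¹ *
        |#{n ∈ Icc 1 N | d ∪ e ⊆ {p ∈ P | ((n : ℕ) : ZMod p) ∈ Ω p}} -
          N * ∏ p ∈ d ∪ e, (#(Ω p) : ℝ) / p| ≤ y ^ 2 := by
    intro d hd e he
    rw [mem_levelSets] at hd he
    have hsub : d ∪ e ⊆ P := union_subset hd.1 he.1
    have hfilter : {n ∈ Icc 1 N | d ∪ e ⊆ {p ∈ P | ((n : ℕ) : ZMod p) ∈ Ω p}} =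
        {n ∈ Icc 1 N | ∀ p ∈ d ∪ e, ((n : ℕ) : ZMod p) ∈ Ω p} :=
      filter_congr fun n _ => ⟨fun h p hp => (mem_filter.1 (h hp)).2,
        fun h p hp => mem_filter.2 ⟨hsub hp, h p hp⟩⟩
    have hcount := abs_card_filter_forall_natCast_mem_sub_le
      (fun p hp => (hP p (hsub hp)).pos)
      (fun p hp q hq => (Nat.coprime_primes (hP p (hsub hp)) (hP q (hsub hq))).2) Ω N
    rw [hfilter]
    calc _ ≤ (∏ p ∈ d, (#(Ω p) : ℝ) / p)⁻¹ * (∏ p ∈ e, (#(Ω p) : ℝ) / p)⁻¹ *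
          ∏ p ∈ d ∪ e, (#(Ω p) : ℝ) := by gcongr
      _ ≤ (∏ p ∈ d, (p : ℝ)) * ∏ p ∈ e, (p : ℝ) :=
          inv_prod_density_mul_prod_card_union_le hΩ hd.1 he.1
      _ ≤ y * y := by
          gcongr
          exacts [hd.2, he.2]
      _ = y ^ 2 := (sq y).symm
  calc _ ≤ ∑ _d ∈ levelSets P y, ∑ _e ∈ levelSets P y, y ^ 2 :=
        sum_le_sum fun d hd => sum_le_sum (hterm d hd)
    _ = #(levelSets P y) * (#(levelSets P y) * y ^ 2) := by simp only [sum_const, nsmul_eq_mul]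
    _ ≤ y * (y * y ^ 2) := by
        have := card_levelSets_le hP hy
        gcongr
    _ = y ^ 4 := by ring

theorem card_siftedSet_le_of_nonempty (hz : 1 < z) (hP : ∀ p ∈ P, p.Prime ∧ (p : ℝ) ≤ z)
    (hκ : ∀ p ∈ P, 2 * κ ≤ p) (hs : 8 * κ + 1 ≤ s) (hΩ₀ : ∀ p ∈ P, (Ω p).Nonempty)
    (hΩ : ∀ p ∈ P, #(Ω p) ≤ κ) (N : ℕ) :
    (#(siftedSet N P Ω) : ℝ) ≤ 2 * N * ∏ p ∈ P, (1 - (#(Ω p) : ℝ) / p) + (z ^ s) ^ 4 := by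
  set ν : ℕ → ℝ := fun p => (#(Ω p) : ℝ) / p
  have hp0 : ∀ p ∈ P, (0 : ℝ) < p := fun p hp => mod_cast (hP p hp).1.pos
  have hν0 : ∀ p ∈ P, 0 < ν p := fun p hp => div_pos (mod_cast (hΩ₀ p hp).card_pos) (hp0 p hp)
  have hνκ : ∀ p ∈ P, ν p ≤ κ / p := fun p hp =>
    div_le_div_of_nonneg_right (mod_cast hΩ p hp) (hp0 p hp).le
  have hνhalf : ∀ p ∈ P, ν p ≤ 1 / 2 := fun p hp => (hνκ p hp).trans <| by
    rw [div_le_div_iff₀ (hp0 p hp) two_pos, one_mul, mul_comm]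
    exact_mod_cast hκ p hp
  have hmass := half_inv_prod_one_sub_le_selbergMass hz hP (fun p hp => (hν0 p hp).le) hνhalf hνκ hs
  have hVpos : 0 < ∏ p ∈ P, (1 - ν p) := prod_pos fun p hp => by linarith [hνhalf p hp]
  have hsub : siftedSet N P Ω ⊆
      siftedBy (Icc 1 N) (fun n => {p ∈ P | (n : ZMod p) ∈ Ω p}) (levelSets P (z ^ s)) := by
    intro n hn
    rw [siftedSet, mem_filter] at hn
    refine mem_filter.2 ⟨hn.1, fun d _ => disjoint_left.2 fun p _ hp => ?_⟩
    exact hn.2 p (mem_filter.1 hp).1 (mem_filter.1 hp).2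
  have hsieve := card_siftedBy_le (ν := ν) (Icc 1 N) (fun n => {p ∈ P | (n : ZMod p) ∈ Ω p}) N
    (fun d hd p hp => ⟨hν0 p ((mem_levelSets.1 hd).1 hp),
      by linarith [hνhalf p ((mem_levelSets.1 hd).1 hp)]⟩)
    (isLowerSet_levelSets fun p hp => (hP p hp).1.pos)
    (empty_mem_levelSets (one_le_pow₀ hz.le) : ∅ ∈ levelSets P (z ^ s))
  calc (#(siftedSet N P Ω) : ℝ) ≤ _ := Nat.cast_le.2 (card_le_card hsub)
    _ ≤ _ := hsieve
    _ ≤ N / ((∏ p ∈ P, (1 - ν p))⁻¹ / 2) + (z ^ s) ^ 4 := by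
        refine add_le_add (by gcongr) ?_
        exact sum_levelSets_remainder_le (fun p hp => (hP p hp).1) hΩ₀ (by positivity) N
    _ = 2 * N * ∏ p ∈ P, (1 - ν p) + (z ^ s) ^ 4 := by field_simp

theorem card_siftedSet_le (hz : 1 < z) (hP : ∀ p ∈ P, p.Prime ∧ (p : ℝ) ≤ z)
    (hκ : ∀ p ∈ P, 2 * κ ≤ p) (hs : 8 * κ + 1 ≤ s) (hΩ : ∀ p ∈ P, #(Ω p) ≤ κ) (N : ℕ) :
    (#(siftedSet N P Ω) : ℝ) ≤ 2 * N * ∏ p ∈ P, (1 - (#(Ω p) : ℝ) / p) + (z ^ s) ^ 4 := by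
  set P' := {p ∈ P | (Ω p).Nonempty}
  have hsub : P' ⊆ P := filter_subset _ _
  have hempty : ∀ p ∈ P, p ∉ P' → Ω p = ∅ := fun p hp hp' =>
    not_nonempty_iff_eq_empty.1 fun h => hp' (mem_filter.2 ⟨hp, h⟩)
  have hsifted : siftedSet N P Ω ⊆ siftedSet N P' Ω :=
    monotone_filter_right _ fun n _ hn p hp => hn p (hsub hp)
  calc (#(siftedSet N P Ω) : ℝ) ≤ #(siftedSet N P' Ω) := Nat.cast_le.2 (card_le_card hsifted)
    _ ≤ 2 * N * ∏ p ∈ P', (1 - (#(Ω p) : ℝ) / p) + (z ^ s) ^ 4 :=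
        card_siftedSet_le_of_nonempty hz (fun p hp => hP p (hsub hp)) (fun p hp => hκ p (hsub hp))
          hs (fun p hp => (mem_filter.1 hp).2) (fun p hp => hΩ p (hsub hp)) N
    _ = 2 * N * ∏ p ∈ P, (1 - (#(Ω p) : ℝ) / p) + (z ^ s) ^ 4 := by
        rw [prod_subset hsub fun p hp hp' => by simp [hempty p hp hp']]

end BoundedDimension

section TotientRatio

theorem one_le_totientRatio {m : ℤ} (hm : m ≠ 0) : 1 ≤ totientRatio m := by
  have hpos : 0 < m.natAbs.totient := Nat.totient_pos.2 (Int.natAbs_pos.2 hm)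
  rw [totientRatio, one_le_div (mod_cast hpos)]
  exact_mod_cast Nat.totient_le _

theorem prod_primeFactors_one_sub_one_div {m : ℤ} (hm : m ≠ 0) :
    ∏ p ∈ m.natAbs.primeFactors, (1 - 1 / (p : ℝ)) = (totientRatio m)⁻¹ := by
  have htotient : ((m.natAbs.totient : ℚ) : ℝ) =
      ((m.natAbs * ∏ p ∈ m.natAbs.primeFactors, (1 - (p : ℚ)⁻¹) : ℚ) : ℝ) :=
    congrArg _ (Nat.totient_eq_mul_prod_factors m.natAbs)
  push_cast at htotient
  have hm₀ : (m.natAbs : ℝ) ≠ 0 := mod_cast Int.natAbs_ne_zero.2 hm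
  simp only [totientRatio, one_div, inv_div]
  rw [eq_div_iff hm₀, htotient, mul_comm]

variable {ι : Type*} [Fintype ι] {m : ι → ℤ} {I : Finset ℕ} {B : ℕ} {z X : ℝ}

theorem inv_prod_totientRatio_le (hm : ∀ j, m j ≠ 0) :
    (∏ j, totientRatio (m j))⁻¹ ≤
      ∏ p ∈ univ.biUnion fun j => (m j).natAbs.primeFactors, (1 - 1 / (p : ℝ)) := by
  calc (∏ j, totientRatio (m j))⁻¹
      = ∏ j, ∏ p ∈ (m j).natAbs.primeFactors, (1 - 1 / (p : ℝ)) := by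
        rw [← prod_inv_distrib]
        exact prod_congr rfl fun j _ => (prod_primeFactors_one_sub_one_div (hm j)).symm
    _ ≤ _ := prod_prod_le_prod_biUnion (fun p => Nat.one_sub_one_div_cast_nonneg p)
        (fun p => Nat.one_sub_one_div_cast_le_one p) _ _

theorem subset_Icc_union_filter_union_primeFactors_union_filter (hm : ∀ j, m j ≠ 0)
    (hI : ∀ p ∈ I, p.Prime) :
    I ⊆ Icc 2 B ∪ {p ∈ I | z < (p : ℕ)} ∪ (univ.biUnion fun j => (m j).natAbs.primeFactors) ∪
      {p ∈ primesIoc B ⌊z⌋₊ | p ∈ I ∧ ∀ j, ¬ (p : ℤ) ∣ m j} := by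
  intro p hp
  by_contra hp'
  simp only [mem_union, not_or] at hp'
  obtain ⟨⟨⟨hsmall, hlarge⟩, hdividing⟩, hrest⟩ := hp'
  have hpB : B < p := not_le.1 fun hpB => hsmall (mem_Icc.2 ⟨(hI p hp).two_le, hpB⟩)
  have hpz : (p : ℝ) ≤ z := not_lt.1 fun hpz => hlarge (mem_filter.2 ⟨hp, hpz⟩)
  refine hrest (mem_filter.2 ⟨mem_primesIoc.2 ⟨⟨hpB, Nat.le_floor hpz⟩, hI p hp⟩, hp, ?_⟩)
  refine fun j hj => hdividing (mem_biUnion.2 ⟨j, mem_univ j, ?_⟩)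
  exact Nat.mem_primeFactors.2 ⟨hI p hp, Int.natCast_dvd.1 hj, Int.natAbs_ne_zero.2 (hm j)⟩

theorem one_div_mul_exp_neg_mul_inv_mul_prod_le (hm : ∀ j, m j ≠ 0) (hB : 1 ≤ B) (hz : 1 < z)
    (hX : 1 ≤ X) (hI : ∀ p ∈ I, p.Prime ∧ (p : ℝ) ≤ X) :
    1 / (B : ℝ) * Real.exp (-(4 * (Real.log X / Real.log z))) * (∏ j, totientRatio (m j))⁻¹ *
        ∏ p ∈ primesIoc B ⌊z⌋₊ with p ∈ I ∧ ∀ j, ¬ (p : ℤ) ∣ m j, (1 - 1 / (p : ℝ)) ≤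
      ∏ p ∈ I, (1 - 1 / (p : ℝ)) := by
  have hf₀ : ∀ p : ℕ, 0 ≤ 1 - 1 / (p : ℝ) := fun p => Nat.one_sub_one_div_cast_nonneg p
  have hf₁ : ∀ p : ℕ, 1 - 1 / (p : ℝ) ≤ 1 := fun p => Nat.one_sub_one_div_cast_le_one p
  have hprod₀ : ∀ J : Finset ℕ, 0 ≤ ∏ p ∈ J, (1 - 1 / (p : ℝ)) := fun J =>
    prod_nonneg fun p _ => hf₀ p
  have hT : 0 < ∏ j, totientRatio (m j) :=
    prod_pos fun j _ => zero_lt_one.trans_le (one_le_totientRatio (hm j))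
  have hlarge : Real.exp (-(4 * (Real.log X / Real.log z))) ≤
      ∏ p ∈ I with z < (p : ℕ), (1 - 1 / (p : ℝ)) := by
    refine exp_neg_le_prod_one_sub_one_div hz hX fun p hp => ?_
    obtain ⟨hp, hzp⟩ := mem_filter.1 hp
    exact ⟨(hI p hp).1, hzp, (hI p hp).2⟩
  rw [← prod_Icc_two_one_sub_one_div hB]
  refine le_trans ?_ (prod_le_prod_of_subset_of_le_one
    (subset_Icc_union_filter_union_primeFactors_union_filter (B := B) (z := z) hm
      fun p hp => (hI p hp).1)
    (fun p _ => hf₀ p) fun p _ _ => hf₁ p)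
  refine (mul_le_mul_of_nonneg_right ?_ (hprod₀ _)).trans
    (prod_mul_prod_le_prod_union hf₀ hf₁ _ _)
  refine (mul_le_mul ?_ (inv_prod_totientRatio_le hm) (by positivity) (hprod₀ _)).trans
    (prod_mul_prod_le_prod_union hf₀ hf₁ _ _)
  exact (mul_le_mul_of_nonneg_left hlarge (hprod₀ _)).trans
    (prod_mul_prod_le_prod_union hf₀ hf₁ _ _)

theorem prod_filter_primesIoc_one_sub_one_div_le (hm : ∀ j, m j ≠ 0) (hB : 1 ≤ B) (hz : 1 < z)
    (hX : 1 ≤ X) (hI : ∀ p ∈ I, p.Prime ∧ (p : ℝ) ≤ X) :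
    ∏ p ∈ primesIoc B ⌊z⌋₊ with p ∈ I ∧ ∀ j, ¬ (p : ℤ) ∣ m j, (1 - 1 / (p : ℝ)) ≤
      B * Real.exp (4 * (Real.log X / Real.log z)) * (∏ j, totientRatio (m j)) *
        ∏ p ∈ I, (1 - 1 / (p : ℝ)) := by
  have : (0 : ℝ) < B := mod_cast hB
  have hT : 0 < ∏ j, totientRatio (m j) :=
    prod_pos fun j _ => zero_lt_one.trans_le (one_le_totientRatio (hm j))
  have hcover := one_div_mul_exp_neg_mul_inv_mul_prod_le hm hB hz hX hI
  rw [Real.exp_neg] at hcover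
  set E := Real.exp (4 * (Real.log X / Real.log z))
  set J := {p ∈ primesIoc B ⌊z⌋₊ | p ∈ I ∧ ∀ j, ¬ (p : ℤ) ∣ m j}
  calc ∏ p ∈ J, (1 - 1 / (p : ℝ))
      = B * E * (∏ j, totientRatio (m j)) *
        (1 / B * E⁻¹ * (∏ j, totientRatio (m j))⁻¹ * ∏ p ∈ J, (1 - 1 / (p : ℝ))) := by
        have : E ≠ 0 := (Real.exp_pos _).ne'
        field_simp
    _ ≤ _ := by gcongr

end TotientRatio

section ShiftResidues

variable {ι : Type*} [Fintype ι] (a : ι → ℤ) (h : ℤ) (I : Finset ℕ)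

/-- The residue classes `-a j` modulo `p`, together with `-h` when `p ∈ I`. Sieving by them keeps
the `n` for which no `n + a j` is divisible by a sieving prime and `n + h` by none from `I`. -/
def shiftResidues (p : ℕ) : Finset (ZMod p) :=
  univ.image (fun j => (-a j : ZMod p)) ∪ if p ∈ I then {(-h : ZMod p)} else ∅

variable {a h I} {p : ℕ}

theorem natCast_eq_neg_intCast_iff {n : ℕ} {c : ℤ} :
    (n : ZMod p) = -(c : ZMod p) ↔ (p : ℤ) ∣ n + c := by
  rw [← ZMod.intCast_zmod_eq_zero_iff_dvd]
  push_cast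
  exact eq_neg_iff_add_eq_zero

theorem natCast_mem_shiftResidues {n : ℕ} :
    (n : ZMod p) ∈ shiftResidues a h I p ↔
      (∃ j, (p : ℤ) ∣ n + a j) ∨ p ∈ I ∧ (p : ℤ) ∣ n + h := by
  simp only [shiftResidues, mem_union, mem_image, mem_univ, true_and, eq_comm (b := (n : ZMod p)),
    ← natCast_eq_neg_intCast_iff]
  refine or_congr_right ?_
  split_ifs with hpI <;> simp [hpI]

theorem card_shiftResidues_le : #(shiftResidues a h I p) ≤ Fintype.card ι + 1 := by
  refine (card_union_le _ _).trans (add_le_add card_image_le ?_)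
  split_ifs <;> simp

theorem le_card_shiftResidues (ha : Function.Injective fun j => (a j : ZMod p)) :
    (Fintype.card ι + if p ∈ I ∧ ∀ j, ¬ (p : ℤ) ∣ h - a j then 1 else 0) ≤
      #(shiftResidues a h I p) := by
  have hcard : #(univ.image fun j => (-a j : ZMod p)) = Fintype.card ι :=
    card_image_of_injective _ (neg_injective.comp ha)
  split_ifs with hp
  · rw [shiftResidues, if_pos hp.1, card_union_of_disjoint, hcard, card_singleton]
    rw [disjoint_singleton_right, mem_image]
    rintro ⟨j, -, hj⟩
    refine hp.2 j ?_
    rw [← ZMod.intCast_zmod_eq_zero_iff_dvd, Int.cast_sub, ← neg_injective hj, sub_self]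
  · rw [add_zero, ← hcard]
    exact card_le_card subset_union_left

theorem one_sub_card_shiftResidues_div_le (ha : Function.Injective fun j => (a j : ZMod p)) :
    1 - (#(shiftResidues a h I p) : ℝ) / p ≤ (1 - 1 / (p : ℝ)) ^ Fintype.card ι *
      if p ∈ I ∧ ∀ j, ¬ (p : ℤ) ∣ h - a j then 1 - 1 / (p : ℝ) else 1 := by
  set r := Fintype.card ι + if p ∈ I ∧ ∀ j, ¬ (p : ℤ) ∣ h - a j then 1 else 0 with hr
  calc 1 - (#(shiftResidues a h I p) : ℝ) / p ≤ 1 - (r : ℝ) / p := by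
        gcongr
        exact le_card_shiftResidues ha
    _ = 1 + r * (-(1 / (p : ℝ))) := by ring
    _ ≤ (1 - 1 / (p : ℝ)) ^ r :=
        one_add_mul_le_pow (by linarith [Nat.one_sub_one_div_cast_nonneg (α := ℝ) p]) r
    _ = _ := by
        rw [hr, pow_add]
        split_ifs <;> simp

variable {B s : ℕ} {z X : ℝ}

theorem prod_one_sub_card_shiftResidues_div_le (hm : ∀ j, h ≠ a j)
    (hB : Fintype.card ι + 1 ≤ B) (ha : ∀ p : ℕ, B < p → Function.Injective fun j => (a j : ZMod p))
    (hz : 1 < z) (hX : 1 ≤ X) (hI : ∀ p ∈ I, p.Prime ∧ (p : ℝ) ≤ X) :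
    ∏ p ∈ primesIoc B ⌊z⌋₊, (1 - (#(shiftResidues a h I p) : ℝ) / p) ≤
      (B / Real.log z) ^ Fintype.card ι * (B * Real.exp (4 * (Real.log X / Real.log z)) *
        (∏ j, totientRatio (h - a j)) * ∏ p ∈ I, (1 - 1 / (p : ℝ))) := by
  have hf₀ : ∀ p : ℕ, 0 ≤ 1 - 1 / (p : ℝ) := fun p => Nat.one_sub_one_div_cast_nonneg p
  calc ∏ p ∈ primesIoc B ⌊z⌋₊, (1 - (#(shiftResidues a h I p) : ℝ) / p)
      ≤ ∏ p ∈ primesIoc B ⌊z⌋₊, ((1 - 1 / (p : ℝ)) ^ Fintype.card ι *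
        if p ∈ I ∧ ∀ j, ¬ (p : ℤ) ∣ h - a j then 1 - 1 / (p : ℝ) else 1) := by
        refine prod_le_prod (fun p hp => sub_nonneg.2 (div_le_one_of_le₀ ?_ p.cast_nonneg))
          fun p hp => one_sub_card_shiftResidues_div_le (ha p (mem_primesIoc.1 hp).1.1)
        exact_mod_cast card_shiftResidues_le.trans (hB.trans (mem_primesIoc.1 hp).1.1.le)
    _ = (∏ p ∈ primesIoc B ⌊z⌋₊, (1 - 1 / (p : ℝ))) ^ Fintype.card ι *
        ∏ p ∈ primesIoc B ⌊z⌋₊ with p ∈ I ∧ ∀ j, ¬ (p : ℤ) ∣ h - a j, (1 - 1 / (p : ℝ)) := by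
        rw [prod_mul_distrib, prod_pow, prod_filter]
    _ ≤ _ := by
        have hlogz := Real.log_pos hz
        refine mul_le_mul (pow_le_pow_left₀ (prod_nonneg fun p _ => hf₀ p)
          (prod_primesIoc_one_sub_one_div_le (by lia) hz) _) ?_ (prod_nonneg fun p _ => hf₀ p)
          (by positivity)
        exact prod_filter_primesIoc_one_sub_one_div_le (fun j => sub_ne_zero.2 (hm j)) (by lia)
          hz hX hI

theorem card_siftedSet_shiftResidues_le (hm : ∀ j, h ≠ a j) (hB : 2 * (Fintype.card ι + 1) ≤ B)
    (ha : ∀ p : ℕ, B < p → Function.Injective fun j => (a j : ZMod p))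
    (hz : 1 < z) (hX : 1 ≤ X) (hI : ∀ p ∈ I, p.Prime ∧ (p : ℝ) ≤ X)
    (hs : 8 * (Fintype.card ι + 1) + 1 ≤ s) (N : ℕ) :
    (#(siftedSet N (primesIoc B ⌊z⌋₊) (shiftResidues a h I)) : ℝ) ≤
      2 * N * ((B / Real.log z) ^ Fintype.card ι *
        (B * Real.exp (4 * (Real.log X / Real.log z)) * (∏ j, totientRatio (h - a j)) *
          ∏ p ∈ I, (1 - 1 / (p : ℝ)))) + (z ^ s) ^ 4 := by
  refine (card_siftedSet_le hz (fun p hp => ?_) (fun p hp => ?_) hs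
    (fun p _ => card_shiftResidues_le) N).trans ?_
  · obtain ⟨⟨-, hpz⟩, hp⟩ := mem_primesIoc.1 hp
    exact ⟨hp, (Nat.le_floor_iff (by linarith)).1 hpz⟩
  · exact hB.trans (mem_primesIoc.1 hp).1.1.le
  · gcongr
    exact prod_one_sub_card_shiftResidues_div_le hm (by lia) ha hz hX hI

end ShiftResidues

section PrimePowerWeights

theorem card_isPrimePow_minFac_le (k Y : ℕ) :
    #{m ∈ Icc 1 Y | IsPrimePow m ∧ m.minFac ≤ k} ≤ k * Nat.log 2 Y := by
  have hsub : {m ∈ Icc 1 Y | IsPrimePow m ∧ m.minFac ≤ k} ⊆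
      (Icc 1 k ×ˢ Icc 1 (Nat.log 2 Y)).image fun x => x.1 ^ x.2 := by
    intro m hm
    obtain ⟨hmY, hpp, hmk⟩ := mem_filter.1 hm
    have hpow := hpp.minFac_pow_factorization_eq
    have hprime := Nat.minFac_prime hpp.ne_one
    have hexp : m.factorization m.minFac ≠ 0 := fun h => hpp.ne_one (by rw [← hpow, h, pow_zero])
    refine mem_image.2 ⟨(m.minFac, m.factorization m.minFac), mem_product.2
      ⟨mem_Icc.2 ⟨hprime.pos, hmk⟩, mem_Icc.2 ⟨Nat.one_le_iff_ne_zero.2 hexp, ?_⟩⟩, hpow⟩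
    refine Nat.le_log_of_pow_le one_lt_two ?_
    calc 2 ^ m.factorization m.minFac ≤ m.minFac ^ m.factorization m.minFac :=
          Nat.pow_le_pow_left hprime.two_le _
      _ = m := hpow
      _ ≤ Y := (mem_Icc.1 hmY).2
  calc _ ≤ #(Icc 1 k ×ˢ Icc 1 (Nat.log 2 Y)) := (card_le_card hsub).trans card_image_le
    _ = k * Nat.log 2 Y := by simp

theorem natLog_two_le_two_mul_log (n : ℕ) : (Nat.log 2 n : ℝ) ≤ 2 * Real.log n := by
  have hlog : (1 / 2 : ℝ) < Real.log 2 := by linarith [Real.log_two_gt_d9]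
  calc (Nat.log 2 n : ℝ) ≤ Real.logb 2 n := mod_cast Real.natLog_le_logb n 2
    _ = Real.log n / Real.log 2 := rfl
    _ ≤ Real.log n / (1 / 2) :=
        div_le_div_of_nonneg_left (Real.log_natCast_nonneg n) (by norm_num) hlog.le
    _ = 2 * Real.log n := by ring

/-- The `1 ≤ n ≤ N` for which the shift `n + c` is a power of a prime at most `k`. -/
def smallPrimePowShifts (N : ℕ) (c : ℤ) (k : ℕ) : Finset ℕ :=
  {n ∈ Icc 1 N | IsPrimePow ((n : ℕ) + c).toNat ∧ ((n : ℕ) + c).toNat.minFac ≤ k}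

theorem card_smallPrimePowShifts_le {N Y : ℕ} {c : ℤ} (hY : N + c ≤ Y) (k : ℕ) :
    (#(smallPrimePowShifts N c k) : ℝ) ≤ k * (2 * Real.log Y) := by
  have hcard : #(smallPrimePowShifts N c k) ≤ k * Nat.log 2 Y := by
    refine le_trans (card_le_card_of_injOn (fun n => ((n : ℤ) + c).toNat) (fun n hn => ?_)
      fun n hn n' hn' hnn' => ?_) (card_isPrimePow_minFac_le k Y)
    · obtain ⟨hnN, hpp, hle⟩ := mem_filter.1 (mem_coe.1 hn)
      refine mem_coe.2 (mem_filter.2 ⟨mem_Icc.2 ⟨hpp.pos, ?_⟩, hpp, hle⟩)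
      have := (mem_Icc.1 hnN).2
      lia
    · have := (mem_filter.1 (mem_coe.1 hn)).2.1.pos
      have := (mem_filter.1 (mem_coe.1 hn')).2.1.pos
      simp only at hnn'
      lia
  calc (#(smallPrimePowShifts N c k) : ℝ) ≤ k * Nat.log 2 Y := mod_cast hcard
    _ ≤ k * (2 * Real.log Y) := by
        gcongr
        exact natLog_two_le_two_mul_log Y

variable {ι : Type*} [Fintype ι] {a : ι → ℤ} {h : ℤ} {I : Finset ℕ} {N Y k B n : ℕ}

theorem prod_vonMangoldt_le_pow_log {m : ι → ℕ} (hm : ∀ j, m j ≤ Y) :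
    ∏ j, Λ (m j) ≤ Real.log Y ^ Fintype.card ι := by
  rw [← card_univ, ← prod_const]
  refine prod_le_prod (fun j _ => vonMangoldt_nonneg) fun j _ => ?_
  rcases (m j).eq_zero_or_pos with hj | hj
  · rw [hj, ArithmeticFunction.map_zero]
    exact Real.log_natCast_nonneg Y
  · exact vonMangoldt_le_log.trans (Real.log_le_log (mod_cast hj) (mod_cast hm j))

theorem mem_siftedSet_shiftResidues_of_lt_minFac (hn : n ∈ Icc 1 N)
    (hnI : ∀ p ∈ I, ¬ (p : ℤ) ∣ n + h) (hna : ∀ j, k < ((n : ℤ) + a j).toNat.minFac) :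
    n ∈ siftedSet N (primesIoc B k) (shiftResidues a h I) := by
  refine mem_filter.2 ⟨hn, fun p hp => ?_⟩
  obtain ⟨⟨-, hpk⟩, hp⟩ := mem_primesIoc.1 hp
  rw [natCast_mem_shiftResidues]
  rintro (⟨j, hj⟩ | ⟨hpI, hpn⟩)
  · have hdvd : p ∣ ((n : ℤ) + a j).toNat := by
      rcases le_total 0 ((n : ℤ) + a j) with h₀ | h₀
      · rwa [← Int.natCast_dvd_natCast, Int.toNat_of_nonneg h₀]
      · rw [Int.toNat_of_nonpos h₀]
        exact dvd_zero p
    exact (hna j).not_ge ((Nat.minFac_le_of_dvd hp.two_le hdvd).trans hpk)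
  · exact hnI p hpI hpn

theorem mem_union_biUnion_of_mul_prod_vonMangoldt_ne_zero (hn : n ∈ Icc 1 N)
    (hne : (if ∀ p ∈ I, ¬ (p : ℤ) ∣ ((n : ℤ) + h) then (1 : ℝ) else 0) *
      ∏ j, Λ (((n : ℤ) + a j).toNat) ≠ 0) :
    n ∈ siftedSet N (primesIoc B k) (shiftResidues a h I) ∪
      univ.biUnion fun j => smallPrimePowShifts N (a j) k := by
  obtain ⟨hif, hprod⟩ := mul_ne_zero_iff.1 hne
  have hpp : ∀ j, IsPrimePow ((n : ℤ) + a j).toNat := fun j =>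
    vonMangoldt_ne_zero_iff.1 (prod_ne_zero_iff.1 hprod j (mem_univ j))
  rw [mem_union, or_iff_not_imp_right, mem_biUnion]
  intro hsmall
  refine mem_siftedSet_shiftResidues_of_lt_minFac hn (by simpa using hif) fun j => ?_
  exact not_le.1 fun hle => hsmall ⟨j, mem_univ j, mem_filter.2 ⟨hn, hpp j, hle⟩⟩

theorem sum_mul_prod_vonMangoldt_le (hY : ∀ j, N + a j ≤ Y) (h : ℤ) (I : Finset ℕ) (B k : ℕ) :
    ∑ n ∈ Icc 1 N, (if ∀ p ∈ I, ¬ (p : ℤ) ∣ ((n : ℤ) + h) then (1 : ℝ) else 0) *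
        ∏ j, Λ (((n : ℤ) + a j).toNat) ≤
      Real.log Y ^ Fintype.card ι *
        (#(siftedSet N (primesIoc B k) (shiftResidues a h I)) +
          Fintype.card ι * (k * (2 * Real.log Y))) := by
  set f : ℕ → ℝ := fun n => (if ∀ p ∈ I, ¬ (p : ℤ) ∣ ((n : ℤ) + h) then (1 : ℝ) else 0) *
    ∏ j, Λ (((n : ℤ) + a j).toNat)
  set S := siftedSet N (primesIoc B k) (shiftResidues a h I)
  set bad := univ.biUnion fun j => smallPrimePowShifts N (a j) k
  have hsub : S ∪ bad ⊆ Icc 1 N :=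
    union_subset (filter_subset _ _) (biUnion_subset.2 fun j _ => filter_subset _ _)
  have hfle : ∀ n ∈ Icc 1 N, f n ≤ Real.log Y ^ Fintype.card ι := by
    intro n hn
    refine (mul_le_of_le_one_left (prod_nonneg fun j _ => vonMangoldt_nonneg) ?_).trans
      (prod_vonMangoldt_le_pow_log fun j => ?_)
    · split_ifs <;> norm_num
    · have := hY j
      have := (mem_Icc.1 hn).2
      lia
  have hbad : (#bad : ℝ) ≤ Fintype.card ι * (k * (2 * Real.log Y)) := by
    calc (#bad : ℝ) ≤ ∑ j, (#(smallPrimePowShifts N (a j) k) : ℝ) := mod_cast card_biUnion_le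
      _ ≤ ∑ _j : ι, k * (2 * Real.log Y) :=
          sum_le_sum fun j _ => card_smallPrimePowShifts_le (hY j) k
      _ = _ := by rw [sum_const, card_univ, nsmul_eq_mul]
  calc ∑ n ∈ Icc 1 N, f n = ∑ n ∈ S ∪ bad, f n := by
        refine (sum_subset hsub fun n hn hnot => not_not.1 fun hne => hnot ?_).symm
        exact mem_union_biUnion_of_mul_prod_vonMangoldt_ne_zero hn hne
    _ ≤ #(S ∪ bad) • Real.log Y ^ Fintype.card ι :=
        sum_le_card_nsmul _ _ _ fun n hn => hfle n (hsub hn)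
    _ = Real.log Y ^ Fintype.card ι * #(S ∪ bad) := by rw [nsmul_eq_mul, mul_comm]
    _ ≤ _ := by
        refine mul_le_mul_of_nonneg_left (le_trans ?_ (add_le_add_right hbad _))
          (pow_nonneg (Real.log_natCast_nonneg Y) _)
        exact_mod_cast card_union_le S bad

end PrimePowerWeights

section Correlation

/-- The sifting limit `X ^ (1 / (8 s))`, for which the sieve of level `z ^ s` has remainder `√X`. -/
noncomputable def siftingLimit (s : ℕ) (X : ℝ) : ℝ := X ^ (1 / (8 * s) : ℝ)

variable {s : ℕ} {X : ℝ}

theorem one_lt_siftingLimit (hs : 0 < s) (hX : 1 < X) : 1 < siftingLimit s X :=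
  Real.one_lt_rpow hX (by positivity)

theorem log_siftingLimit (hX : 0 < X) : Real.log (siftingLimit s X) = Real.log X / (8 * s) := by
  rw [siftingLimit, Real.log_rpow hX, one_div_mul_eq_div]

theorem siftingLimit_pow_pow_four (hs : 0 < s) (hX : 0 ≤ X) :
    (siftingLimit s X ^ s) ^ 4 = √X := by
  have hs₀ : (s : ℝ) ≠ 0 := mod_cast hs.ne'
  rw [← pow_mul, siftingLimit, ← Real.rpow_natCast, ← Real.rpow_mul hX, Real.sqrt_eq_rpow]
  congr 1
  push_cast
  field_simp
  norm_num

theorem siftingLimit_le_sqrt (hs : 0 < s) (hX : 1 < X) : siftingLimit s X ≤ √X := by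
  rw [← siftingLimit_pow_pow_four hs (by linarith), ← pow_mul]
  exact le_self_pow₀ (one_lt_siftingLimit hs hX).le (by positivity)

theorem pow_log_mul_sqrt_le {I : Finset ℕ} (hX : 1 < X) (hI : ∀ p ∈ I, p.Prime ∧ (p : ℝ) ≤ X)
    (k : ℕ) : Real.log X ^ k * √X ≤
      4 ^ k * k.factorial * Real.exp 16 * (X * ∏ p ∈ I, (1 - 1 / (p : ℝ))) := by
  have hX₀ : 0 < X := by linarith
  have hlog : Real.log X ^ k ≤ 4 ^ k * k.factorial * X ^ (1 / 4 : ℝ) := by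
    have hexp := Real.pow_div_factorial_le_exp (Real.log X / 4)
      (div_nonneg (Real.log_pos hX).le (by norm_num)) k
    rw [div_pow, div_div, div_le_iff₀ (by positivity)] at hexp
    rw [Real.rpow_def_of_pos hX₀, mul_one_div, mul_comm]
    exact hexp
  have hprod := exp_neg_mul_rpow_neg_le_prod_one_sub_one_div (ε := 1 / 4) (by norm_num) hX hI
  have hrpow : X ^ (1 / 4 : ℝ) * √X = X * X ^ (-(1 / 4) : ℝ) := by
    rw [Real.sqrt_eq_rpow, ← Real.rpow_add hX₀, ← Real.rpow_one_add' hX₀.le (by norm_num)]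
    norm_num
  calc Real.log X ^ k * √X ≤ 4 ^ k * k.factorial * X ^ (1 / 4 : ℝ) * √X := by gcongr
    _ = 4 ^ k * k.factorial * Real.exp 16 *
        (X * (Real.exp (-(4 / (1 / 4))) * X ^ (-(1 / 4) : ℝ))) := by
        rw [mul_assoc _ (X ^ _), hrpow, show -(4 / (1 / 4) : ℝ) = -16 by norm_num, Real.exp_neg]
        field_simp
    _ ≤ _ := by gcongr

theorem exists_log_floor_add_le (A : ℕ) : ∃ C : ℝ, 0 < C ∧ ∀ X : ℝ, 2 ≤ X →
    Real.log (⌊X⌋₊ + A : ℕ) ≤ C * Real.log X := by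
  have hlog₂ : 0 < Real.log 2 := Real.log_pos one_lt_two
  have hA : 0 ≤ Real.log (1 + A) := Real.log_nonneg (by simp)
  refine ⟨1 + Real.log (1 + A) / Real.log 2, by positivity, fun X hX => ?_⟩
  have hfloor : (0 : ℝ) < (⌊X⌋₊ + A : ℕ) :=
    mod_cast Nat.add_pos_left (Nat.floor_pos.2 (by linarith)) A
  have hle : ((⌊X⌋₊ + A : ℕ) : ℝ) ≤ X * (1 + A) := by
    push_cast
    nlinarith [Nat.floor_le (by linarith : 0 ≤ X), (A.cast_nonneg : (0 : ℝ) ≤ A)]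
  calc Real.log (⌊X⌋₊ + A : ℕ) ≤ Real.log X + Real.log (1 + A) := by
        rw [← Real.log_mul (by linarith) (by positivity)]
        exact Real.log_le_log hfloor hle
    _ = Real.log X + Real.log (1 + A) / Real.log 2 * Real.log 2 := by
        rw [div_mul_cancel₀ _ hlog₂.ne']
    _ ≤ Real.log X + Real.log (1 + A) / Real.log 2 * Real.log X := by gcongr
    _ = (1 + Real.log (1 + A) / Real.log 2) * Real.log X := by ring

theorem exists_forall_injective_intCast_zmod {ι : Type*} [Finite ι] {a : ι → ℤ}
    (ha : Function.Injective a) (m : ℕ) :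
    ∃ B, m ≤ B ∧ ∀ p : ℕ, B < p → Function.Injective fun j => (a j : ZMod p) := by
  cases nonempty_fintype ι
  set A := univ.sup fun j => (a j).natAbs
  have hA : ∀ j, (a j).natAbs ≤ A := fun j => le_sup (f := fun j => (a j).natAbs) (mem_univ j)
  refine ⟨m + 2 * A, Nat.le_add_right _ _, fun p hp i j hij => ?_⟩
  rw [← sub_eq_zero, ← Int.cast_sub, ZMod.intCast_zmod_eq_zero_iff_dvd] at hij
  have hi := hA i
  have hj := hA j
  exact ha (sub_eq_zero.1 (Int.eq_zero_of_abs_lt_dvd hij (abs_lt.2 ⟨by lia, by lia⟩)))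

variable {ι : Type*} [Fintype ι] {a : ι → ℤ}

theorem exists_card_siftedSet_shiftResidues_le (ha : Function.Injective a) :
    ∃ (K : ℝ) (B s : ℕ), 0 < K ∧ 0 < s ∧ ∀ X : ℝ, 2 ≤ X → ∀ h : ℤ, (∀ j, h ≠ a j) →
      ∀ I : Finset ℕ, (∀ p ∈ I, p.Prime ∧ (p : ℝ) ≤ X) →
      (#(siftedSet ⌊X⌋₊ (primesIoc B ⌊siftingLimit s X⌋₊) (shiftResidues a h I)) : ℝ) ≤
        K * (X * (∏ j, totientRatio (h - a j)) * ∏ p ∈ I, (1 - 1 / (p : ℝ))) /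
          Real.log X ^ Fintype.card ι + √X := by
  obtain ⟨B, hB, hBa⟩ := exists_forall_injective_intCast_zmod ha (2 * (Fintype.card ι + 1))
  set s := 8 * (Fintype.card ι + 1) + 1
  have hs : 0 < s := Nat.succ_pos _
  have hB₀ : 0 < B := by lia
  refine ⟨2 * (8 * s * B) ^ Fintype.card ι * (B * Real.exp (4 * (8 * s))), B, s, by positivity, hs,
    fun X hX h hm I hI => ?_⟩
  have hX₀ : 0 < X := by linarith
  have hlogX : 0 < Real.log X := Real.log_pos (by linarith)
  have hratio : Real.log X / Real.log (siftingLimit s X) = 8 * s := by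
    rw [log_siftingLimit hX₀, div_div_cancel₀ hlogX.ne']
  have hT : 0 ≤ ∏ j, totientRatio (h - a j) :=
    prod_nonneg fun j _ => div_nonneg (Nat.cast_nonneg _) (Nat.cast_nonneg _)
  have hW : 0 ≤ ∏ p ∈ I, (1 - 1 / (p : ℝ)) :=
    prod_nonneg fun p _ => Nat.one_sub_one_div_cast_nonneg p
  have hcard := card_siftedSet_shiftResidues_le hm hB hBa
    (one_lt_siftingLimit hs (by linarith : 1 < X)) (by linarith : 1 ≤ X) hI le_rfl ⌊X⌋₊
  rw [hratio, siftingLimit_pow_pow_four hs hX₀.le, log_siftingLimit hX₀] at hcard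
  refine hcard.trans (add_le_add_left ?_ _)
  calc _ ≤ 2 * X * ((B / (Real.log X / (8 * s))) ^ Fintype.card ι * (B * Real.exp (4 * (8 * s)) *
          (∏ j, totientRatio (h - a j)) * ∏ p ∈ I, (1 - 1 / (p : ℝ)))) := by
        gcongr
        exact Nat.floor_le hX₀.le
    _ = _ := by
        rw [div_div_eq_mul_div, div_pow, mul_comm (B : ℝ) (8 * s)]
        ring

theorem exists_sum_mul_prod_vonMangoldt_le_add_sqrt (ha : Function.Injective a) :
    ∃ K L M : ℝ, 0 < K ∧ 0 ≤ L ∧ 0 ≤ M ∧ ∀ X : ℝ, 2 ≤ X → ∀ h : ℤ, (∀ j, h ≠ a j) →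
      ∀ I : Finset ℕ, (∀ p ∈ I, p.Prime ∧ (p : ℝ) ≤ X) →
      ∑ n ∈ Icc 1 ⌊X⌋₊,
        (if ∀ p ∈ I, ¬ (p : ℤ) ∣ ((n : ℤ) + h) then (1 : ℝ) else 0) *
          ∏ j, Λ (((n : ℤ) + a j).toNat)
      ≤ K * (X * (∏ j, totientRatio (h - a j)) * ∏ p ∈ I, (1 - 1 / (p : ℝ))) +
        L * (Real.log X ^ Fintype.card ι * √X) +
        M * (Real.log X ^ (Fintype.card ι + 1) * √X) := by
  set ℓ := Fintype.card ι
  obtain ⟨A, hA⟩ : ∃ A : ℕ, ∀ j, a j ≤ A :=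
    ⟨univ.sup fun j => (a j).toNat, fun j => Int.toNat_le.1
      (le_sup (f := fun j => (a j).toNat) (mem_univ j))⟩
  obtain ⟨C, hC, hlog⟩ := exists_log_floor_add_le A
  obtain ⟨K, B, s, hK, hs, hcard⟩ := exists_card_siftedSet_shiftResidues_le ha
  refine ⟨C ^ ℓ * K, C ^ ℓ, 2 * ℓ * C ^ (ℓ + 1), by positivity, by positivity, by positivity,
    fun X hX h hm I hI => ?_⟩
  have hlogX : 0 < Real.log X := Real.log_pos (by linarith)
  have hz : (⌊siftingLimit s X⌋₊ : ℝ) ≤ √X :=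
    (Nat.floor_le (zero_lt_one.trans (one_lt_siftingLimit hs (by linarith))).le).trans
      (siftingLimit_le_sqrt hs (by linarith))
  set Q := X * (∏ j, totientRatio (h - a j)) * ∏ p ∈ I, (1 - 1 / (p : ℝ))
  calc _ ≤ Real.log (⌊X⌋₊ + A : ℕ) ^ ℓ *
        (#(siftedSet ⌊X⌋₊ (primesIoc B ⌊siftingLimit s X⌋₊) (shiftResidues a h I)) +
          ℓ * (⌊siftingLimit s X⌋₊ * (2 * Real.log (⌊X⌋₊ + A : ℕ)))) :=
        sum_mul_prod_vonMangoldt_le (fun j => by have := hA j; lia) h I B _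
    _ ≤ (C * Real.log X) ^ ℓ * (K * Q / Real.log X ^ ℓ + √X +
          ℓ * (√X * (2 * (C * Real.log X)))) := by
        gcongr
        exacts [hlog X hX, hcard X hX h hm I hI, hlog X hX]
    _ = C ^ ℓ * K * Q + C ^ ℓ * (Real.log X ^ ℓ * √X) +
          2 * ℓ * C ^ (ℓ + 1) * (Real.log X ^ (ℓ + 1) * √X) := by
        rw [mul_pow]
        field_simp
        ring

theorem correlation_primes_sifted_bound_general (ha : Function.Injective a) :
    ∃ K : ℝ, 0 < K ∧ ∀ X : ℝ, 2 ≤ X → ∀ h : ℤ, (∀ j, h ≠ a j) → ∀ I : Finset ℕ,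
      (∀ p ∈ I, p.Prime ∧ (p : ℝ) ≤ X) →
      ∑ n ∈ Icc 1 ⌊X⌋₊,
        (if ∀ p ∈ I, ¬ (p : ℤ) ∣ ((n : ℤ) + h) then (1 : ℝ) else 0) *
          ∏ j, Λ (((n : ℤ) + a j).toNat)
      ≤ K * (X * (∏ j, totientRatio (h - a j)) * ∏ p ∈ I, (1 - 1 / (p : ℝ))) := by
  obtain ⟨K, L, M, hK, hL, hM, hsum⟩ := exists_sum_mul_prod_vonMangoldt_le_add_sqrt ha
  set ℓ := Fintype.card ι
  set c : ℕ → ℝ := fun k => 4 ^ k * k.factorial * Real.exp 16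
  refine ⟨K + L * c ℓ + M * c (ℓ + 1), by positivity, fun X hX h hm I hI => ?_⟩
  set T := ∏ j, totientRatio (h - a j)
  set W := ∏ p ∈ I, (1 - 1 / (p : ℝ))
  have hW : 0 ≤ W := prod_nonneg fun p _ => Nat.one_sub_one_div_cast_nonneg p
  have hT : 1 ≤ T := one_le_prod fun j _ => one_le_totientRatio (sub_ne_zero.2 (hm j))
  have herror (k : ℕ) : Real.log X ^ k * √X ≤ c k * (X * T * W) := by
    refine (pow_log_mul_sqrt_le (by linarith) hI k).trans ?_
    rw [mul_assoc X]
    gcongr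
    exact le_mul_of_one_le_left hW hT
  calc _ ≤ K * (X * T * W) + L * (Real.log X ^ ℓ * √X) + M * (Real.log X ^ (ℓ + 1) * √X) :=
        hsum X hX h hm I hI
    _ ≤ K * (X * T * W) + L * (c ℓ * (X * T * W)) + M * (c (ℓ + 1) * (X * T * W)) := by
        linarith [mul_le_mul_of_nonneg_left (herror ℓ) hL,
          mul_le_mul_of_nonneg_left (herror (ℓ + 1)) hM]
    _ = (K + L * c ℓ + M * c (ℓ + 1)) * (X * T * W) := by ring

end Correlation

open scoped Classical in
/-- **Lemma 2.10.** Fix `ℓ ≥ 1` and distinct integers `a₁, …, a_ℓ`. For `X ≥ 2`,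
an integer `1 ≤ h ≤ X` with `h ≠ a_j` for all `j`, and a set `I ⊆ [1,X]` of
primes, letting `N` be the set of positive integers with no prime factor in `I`,
`∑_{n≤X} 1_N(n+h)·Λ(n+a₁)⋯Λ(n+a_ℓ)
  ≪ X·∏_j (|h−a_j|/φ(|h−a_j|))^{2^{ℓ+1}}·∏_{p∈I}(1 − 1/p)`. -/
theorem correlation_primes_sifted_bound (ℓ : ℕ) (hℓ : 1 ≤ ℓ) (a : Fin ℓ → ℤ)
    (hdistinct : Function.Injective a) :
    ∃ K : ℝ, 0 < K ∧ ∀ X : ℝ, 2 ≤ X → ∀ h : ℤ, 1 ≤ h → (h : ℝ) ≤ X →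
      (∀ j, h ≠ a j) → ∀ I : Finset ℕ,
      (∀ p ∈ I, p.Prime ∧ (p : ℝ) ≤ X) →
      ∑ n ∈ Icc 1 ⌊X⌋₊,
        (if ∀ p ∈ I, ¬ (p : ℤ) ∣ ((n : ℤ) + h) then (1 : ℝ) else 0) *
          ∏ j, Λ (((n : ℤ) + a j).toNat)
      ≤ K * (X * (∏ j, totientRatio (h - a j) ^ (2 ^ (ℓ + 1))) *
          ∏ p ∈ I, (1 - 1 / (p : ℝ))) := by
  obtain ⟨K, hK, hbound⟩ := correlation_primes_sifted_bound_general hdistinct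
  refine ⟨K, hK, fun X hX h _ _ hm I hI => (hbound X hX h hm I hI).trans ?_⟩
  have hT : ∀ j, 1 ≤ totientRatio (h - a j) := fun j =>
    one_le_totientRatio (sub_ne_zero.2 (hm j))
  have hW : 0 ≤ ∏ p ∈ I, (1 - 1 / (p : ℝ)) :=
    prod_nonneg fun p _ => Nat.one_sub_one_div_cast_nonneg p
  have hprod : ∏ j, totientRatio (h - a j) ≤ ∏ j, totientRatio (h - a j) ^ 2 ^ (ℓ + 1) :=
    prod_le_prod (fun j _ => zero_le_one.trans (hT j)) fun j _ =>
      le_self_pow₀ (hT j) (by positivity)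
  gcongr
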